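/- arXiv:cond-mat/0205123 — 2 statements merged into one kernel-verified Lean document; each statement's English description precedes it below -/
import Mathlib

section
/- For every β ≥ 0 and h ∈ ℝ, limsup_{N→∞} N⁻¹ E log Z_N(β,h,J) ≤ ᾱ(β,h), where ᾱ(β,h) is the infimum of the trial function ᾱ(β,h;x) over all piecewise constant functional order parameters x. -/
open MeasureTheory ProbabilityTheory Filter

noncomputable section

/-! ## Gaussian disorder -/

/-- The standard (centered, unit variance) Gaussian measure on `ℝ`. -/
def stdGauss : Measure ℝ := gaussianReal 0 1

instance : IsProbabilityMeasure stdGauss := by unfold stdGauss; infer_instance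

/-- `N` i.i.d. standard Gaussian variables. -/
def gaussN (N : ℕ) : Measure (Fin N → ℝ) := Measure.pi fun _ => stdGauss

instance (N : ℕ) : IsProbabilityMeasure (gaussN N) := by unfold gaussN; infer_instance

/-- The i.i.d. standard Gaussian couplings `J_{ij}` (only entries with `i < j` are used). -/
def gaussC (N : ℕ) : Measure (Fin N → Fin N → ℝ) := Measure.pi fun _ => gaussN N

instance (N : ℕ) : IsProbabilityMeasure (gaussC N) := by unfold gaussC; infer_instance

/-- The i.i.d. standard Gaussian one-body fields `J_i^a`, `a = 1, …, K`
(row `⟨a-1⟩ : Fin K` corresponds to the level `a` of the paper). -/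
def gaussS (K N : ℕ) : Measure (Fin K → Fin N → ℝ) := Measure.pi fun _ => gaussN N

instance (K N : ℕ) : IsProbabilityMeasure (gaussS K N) := by unfold gaussS; infer_instance

/-- I.i.d. standard Gaussian couplings indexed by subsets of sites, for the p-spin model
(only the cardinality-`p` subsets are used). -/
def gaussP (N : ℕ) : Measure (Finset (Fin N) → ℝ) := Measure.pi fun _ => stdGauss

instance (N : ℕ) : IsProbabilityMeasure (gaussP N) := by unfold gaussP; infer_instance

/-! ## Spins and overlaps -/

/-- The spin value (`±1`) of a Boolean configuration entry. -/
def spin (b : Bool) : ℝ := if b then 1 else -1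

/-- The overlap `q₁₂ = N⁻¹ ∑ᵢ σᵢ⁽¹⁾ σᵢ⁽²⁾` of two replicas. -/
def overlap (N : ℕ) (σ τ : Fin N → Bool) : ℝ := (N : ℝ)⁻¹ * ∑ i, spin (σ i) * spin (τ i)

/-! ## Piecewise constant functional order parameters and the Parisi function -/

/-- One backward step of the Parisi recursion on an interval of constancy of the
functional order parameter: from `g = f(q_a, ·)`, with value `m` of the order parameter
and `s = q_a - q`, produce `f(q, ·)`. -/
def pStep (m s : ℝ) (g : ℝ → ℝ) (y : ℝ) : ℝ :=
  if m = 0 then ∫ z, g (y + z * Real.sqrt s) ∂stdGauss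
  else m⁻¹ * Real.log (∫ z, Real.exp (m * g (y + z * Real.sqrt s)) ∂stdGauss)

/-- `parisiLevel K q m β j` is the Parisi function `f(q_{K-j}, ·; x, β)` at the node
`q_{K-j}`, obtained by `j` backward steps from the final condition `f(q_K, y) = log cosh (β y)`. -/
def parisiLevel (K : ℕ) (q m : ℕ → ℝ) (β : ℝ) : ℕ → ℝ → ℝ
  | 0 => fun y => Real.log (Real.cosh (β * y))
  | j + 1 => pStep (m (K - j)) (q (K - j) - q (K - j - 1)) (parisiLevel K q m β j)

/-- The Parisi function `f(r, y; x, β)` for a piecewise constant order parameter `x`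
given by nodes `q` and values `m`:  for `q_{a-1} ≤ r ≤ q_a` it is obtained from
`f(q_a, ·)` by one backward step with value `m_a` over a time `q_a - r`. -/
def parisiF (K : ℕ) (q m : ℕ → ℝ) (β : ℝ) (r y : ℝ) : ℝ :=
  pStep (m (sInf {a : ℕ | r ≤ q a})) (q (sInf {a : ℕ | r ≤ q a}) - r)
    (parisiLevel K q m β (K - sInf {a : ℕ | r ≤ q a})) y

/-- The functional order parameter as a function: `x(r) = m_a` for `q_{a-1} ≤ r < q_a`,
and `x(1) = m_K`. -/
def xFun (K : ℕ) (q m : ℕ → ℝ) (r : ℝ) : ℝ :=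
  if 1 ≤ r then m K else m (sInf {a : ℕ | r < q a})

/-- A piecewise constant functional order parameter:
`0 = q_0 ≤ q_1 ≤ … ≤ q_K = 1`, `0 ≤ m_1 ≤ … ≤ m_K ≤ 1`,
with the conventions `m_0 = 0`, `m_{K+1} = 1`. -/
structure OrderParam where
  K : ℕ
  hK : 1 ≤ K
  q : ℕ → ℝ
  m : ℕ → ℝ
  hq0 : q 0 = 0
  hqK : q K = 1
  hq_mono : ∀ a, a < K → q a ≤ q (a + 1)
  hm0 : m 0 = 0
  hmtop : m (K + 1) = 1
  hm1 : 0 ≤ m 1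
  hm_mono : ∀ a, 1 ≤ a → a < K → m a ≤ m (a + 1)
  hmK : m K ≤ 1

/-- Guerra's trial function `ᾱ(β, h; x) = log 2 + f(0, h; x, β) - (β²/2) ∫₀¹ r x(r) dr`. -/
def trialAlpha (K : ℕ) (q m : ℕ → ℝ) (β h : ℝ) : ℝ :=
  Real.log 2 + parisiLevel K q m β K h - β ^ 2 / 2 * ∫ r in (0 : ℝ)..1, r * xFun K q m r

/-! ## The Sherrington–Kirkpatrick model -/

/-- The SK Hamiltonian `H_N(σ, h, J) = -(1/√N) ∑_{i<j} J_{ij} σ_i σ_j - h ∑_i σ_i`. -/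
def hamSK (N : ℕ) (h : ℝ) (Jc : Fin N → Fin N → ℝ) (σ : Fin N → Bool) : ℝ :=
  -(1 / Real.sqrt N) * ∑ i, ∑ j, (if i < j then Jc i j * spin (σ i) * spin (σ j) else 0)
    - h * ∑ i, spin (σ i)

/-- The SK partition function `Z_N(β, h, J)`. -/
def ZSK (N : ℕ) (β h : ℝ) (Jc : Fin N → Fin N → ℝ) : ℝ :=
  ∑ σ : Fin N → Bool, Real.exp (-(β * hamSK N h Jc σ))

/-- The quenched average `N⁻¹ E log Z_N(β, h, J)`. -/
def quenchedFE (N : ℕ) (β h : ℝ) : ℝ :=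
  (N : ℝ)⁻¹ * ∫ Jc, Real.log (ZSK N β h Jc) ∂gaussC N

/-- The ground state energy density `e_N(J, h)`, defined by
`-e_N(J, h) = N⁻¹ min_σ H_N(σ, h, J)`. -/
def eGS (N : ℕ) (h : ℝ) (Jc : Fin N → Fin N → ℝ) : ℝ :=
  -((N : ℝ)⁻¹ * ⨅ σ : Fin N → Bool, hamSK N h Jc σ)

/-- The quenched ground state energy density `e_N(h) = E(e_N(J, h))`. -/
def eQuenched (N : ℕ) (h : ℝ) : ℝ := ∫ Jc, eGS N h Jc ∂gaussC N

/-! ## The interpolating system -/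

/-- The interpolating Boltzmann factor. -/
def bFac (N K : ℕ) (β h t : ℝ) (q : ℕ → ℝ) (Jc : Fin N → Fin N → ℝ)
    (Js : Fin K → Fin N → ℝ) (σ : Fin N → Bool) : ℝ :=
  Real.exp (β * Real.sqrt (t / N) *
        ∑ i, ∑ j, (if i < j then Jc i j * spin (σ i) * spin (σ j) else 0)
      + β * h * ∑ i, spin (σ i)
      + β * Real.sqrt (1 - t) *
          ∑ a : Fin K, Real.sqrt (q (a.val + 1) - q a.val) * ∑ i, Js a i * spin (σ i))

/-- The interpolating partition function `Z̃_N(β, h; t; x; J)`. -/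
def Ztil (N K : ℕ) (β h t : ℝ) (q : ℕ → ℝ) (Jc : Fin N → Fin N → ℝ)
    (Js : Fin K → Fin N → ℝ) : ℝ :=
  ∑ σ : Fin N → Bool, bFac N K β h t q Jc Js σ

/-- `Wrec … j` is the random variable `Z_{K-j}`:  `Z_K = Z̃_N` and
`Z_{a-1} = (E_a (Z_a^{m_a}))^{1/m_a}`, where `E_a` integrates the Gaussian row `J^a`. -/
def Wrec (N K : ℕ) (β h t : ℝ) (q m : ℕ → ℝ) :
    ℕ → (Fin N → Fin N → ℝ) → (Fin K → Fin N → ℝ) → ℝ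
  | 0 => Ztil N K β h t q
  | j + 1 => fun Jc Js =>
      if hj : j < K then
        (∫ g : Fin N → ℝ,
            (Wrec N K β h t q m j Jc (Function.update Js ⟨K - 1 - j, by omega⟩ g)) ^ m (K - j)
          ∂gaussN N) ^ (m (K - j))⁻¹
      else Wrec N K β h t q m j Jc Js

/-- `Zrec … a` is the random variable `Z_a` of the broken replica interpolation. -/
def Zrec (N K : ℕ) (β h t : ℝ) (q m : ℕ → ℝ) (a : ℕ) :
    (Fin N → Fin N → ℝ) → (Fin K → Fin N → ℝ) → ℝ :=
  Wrec N K β h t q m (K - a)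

/-- The interpolating auxiliary function `α̃_N(t) = N⁻¹ E₀ log Z₀`. -/
def atilde (N K : ℕ) (β h : ℝ) (q m : ℕ → ℝ) (t : ℝ) : ℝ :=
  (N : ℝ)⁻¹ * ∫ Jc, Real.log (Wrec N K β h t q m K Jc 0) ∂gaussC N

/-- The normalized weight `f_a = Z_a^{m_a} / E_a(Z_a^{m_a}) = Z_a^{m_a} / Z_{a-1}^{m_a}`. -/
def fWeight (N K : ℕ) (β h t : ℝ) (q m : ℕ → ℝ) (a : ℕ) (Jc : Fin N → Fin N → ℝ)
    (Js : Fin K → Fin N → ℝ) : ℝ :=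
  Zrec N K β h t q m a Jc Js ^ m a / Zrec N K β h t q m (a - 1) Jc Js ^ m a

/-- The Gibbs expectation `ω(A)` of the interpolating Boltzmann factor. -/
def gibbs (N K : ℕ) (β h t : ℝ) (q : ℕ → ℝ) (A : (Fin N → Bool) → ℝ)
    (Jc : Fin N → Fin N → ℝ) (Js : Fin K → Fin N → ℝ) : ℝ :=
  (∑ σ : Fin N → Bool, A σ * bFac N K β h t q Jc Js σ) / Ztil N K β h t q Jc Js

/-- The two-replica Gibbs product expectation `Ω(A)`. -/
def gibbs2 (N K : ℕ) (β h t : ℝ) (q : ℕ → ℝ) (A : (Fin N → Bool) → (Fin N → Bool) → ℝ)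
    (Jc : Fin N → Fin N → ℝ) (Js : Fin K → Fin N → ℝ) : ℝ :=
  (∑ σ : Fin N → Bool, ∑ τ : Fin N → Bool,
      A σ τ * bFac N K β h t q Jc Js σ * bFac N K β h t q Jc Js τ) /
    Ztil N K β h t q Jc Js ^ 2

/-- `omT1 … A j` is the partially averaged state `ω̃_{K-j}(A)`:
`ω̃_K = ω` and `ω̃_{a-1}(·) = E_a (f_a ω̃_a(·))`. -/
def omT1 (N K : ℕ) (β h t : ℝ) (q m : ℕ → ℝ) (A : (Fin N → Bool) → ℝ) :
    ℕ → (Fin N → Fin N → ℝ) → (Fin K → Fin N → ℝ) → ℝ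
  | 0 => gibbs N K β h t q A
  | j + 1 => fun Jc Js =>
      if hj : j < K then
        ∫ g : Fin N → ℝ,
          fWeight N K β h t q m (K - j) Jc (Function.update Js ⟨K - 1 - j, by omega⟩ g) *
            omT1 N K β h t q m A j Jc (Function.update Js ⟨K - 1 - j, by omega⟩ g)
          ∂gaussN N
      else omT1 N K β h t q m A j Jc Js

/-- `omT2 … A j` is the partially averaged two-replica state `Ω̃_{K-j}(A)`:
`Ω̃_K = Ω` and `Ω̃_{a-1}(·) = E_a (f_a Ω̃_a(·))`. -/
def omT2 (N K : ℕ) (β h t : ℝ) (q m : ℕ → ℝ) (A : (Fin N → Bool) → (Fin N → Bool) → ℝ) :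
    ℕ → (Fin N → Fin N → ℝ) → (Fin K → Fin N → ℝ) → ℝ
  | 0 => gibbs2 N K β h t q A
  | j + 1 => fun Jc Js =>
      if hj : j < K then
        ∫ g : Fin N → ℝ,
          fWeight N K β h t q m (K - j) Jc (Function.update Js ⟨K - 1 - j, by omega⟩ g) *
            omT2 N K β h t q m A j Jc (Function.update Js ⟨K - 1 - j, by omega⟩ g)
          ∂gaussN N
      else omT2 N K β h t q m A j Jc Js

/-- The deformed quenched average `⟨A⟩_a = E(f_1 ⋯ f_a Ω̃_a(A))` at interpolation
parameter `t`, for a function `A` of two replicas. -/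
def angA (N K : ℕ) (β h t : ℝ) (q m : ℕ → ℝ) (a : ℕ)
    (A : (Fin N → Bool) → (Fin N → Bool) → ℝ) : ℝ :=
  ∫ Jc, ∫ Js,
      (∏ b ∈ Finset.Icc 1 a, fWeight N K β h t q m b Jc Js) *
        omT2 N K β h t q m A (K - a) Jc Js
    ∂gaussS K N ∂gaussC N

/-! ## Zero temperature (ground state) objects -/

/-- The zero-temperature Parisi recursion: `parisiLevelBar K q m j` is `f̄(q_{K-j}, ·; x̄)`,
with final condition `f̄(q_K, y) = |y|`. -/
def parisiLevelBar (K : ℕ) (q m : ℕ → ℝ) : ℕ → ℝ → ℝ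
  | 0 => fun y => |y|
  | j + 1 => pStep (m (K - j)) (q (K - j) - q (K - j - 1)) (parisiLevelBar K q m j)

/-- A zero-temperature piecewise constant order parameter: nodes
`0 = q_0 ≤ … ≤ q_K = 1` and nondecreasing values `0 ≤ m̄_1 ≤ … ≤ m̄_K`
(no upper bound `1`), with the convention `m̄_0 = 0`. -/
structure ZeroTParam where
  K : ℕ
  hK : 1 ≤ K
  q : ℕ → ℝ
  m : ℕ → ℝ
  hq0 : q 0 = 0
  hqK : q K = 1
  hq_mono : ∀ a, a < K → q a ≤ q (a + 1)
  hm0 : m 0 = 0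
  hm1 : 0 ≤ m 1
  hm_mono : ∀ a, 1 ≤ a → a < K → m a ≤ m (a + 1)

/-- The zero-temperature trial function `α̃(h; x̄) = f̄(0, h; x̄) - (1/2) ∫₀¹ r x̄(r) dr`. -/
def gsTrial (K : ℕ) (q m : ℕ → ℝ) (h : ℝ) : ℝ :=
  parisiLevelBar K q m K h - 1 / 2 * ∫ r in (0 : ℝ)..1, r * xFun K q m r

/-! ## The p-spin model -/

/-- A piecewise constant functional order parameter on `[0, p/2]`:
`0 = q_0 ≤ … ≤ q_K = p/2` and `0 ≤ m_1 ≤ … ≤ m_K ≤ 1`. -/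
structure POrderParam (p : ℕ) where
  K : ℕ
  hK : 1 ≤ K
  q : ℕ → ℝ
  m : ℕ → ℝ
  hq0 : q 0 = 0
  hqK : q K = p / 2
  hq_mono : ∀ a, a < K → q a ≤ q (a + 1)
  hm1 : 0 ≤ m 1
  hm_mono : ∀ a, 1 ≤ a → a < K → m a ≤ m (a + 1)
  hmK : m K ≤ 1

/-- The p-spin Hamiltonian
`H_N(σ,h,J) = -(p!/(2N^{p-1}))^{1/2} ∑_{i_1<…<i_p} J_{i_1…i_p} σ_{i_1}⋯σ_{i_p} - h ∑_i σ_i`. -/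
def hamP (p N : ℕ) (h : ℝ) (J : Finset (Fin N) → ℝ) (σ : Fin N → Bool) : ℝ :=
  -Real.sqrt ((Nat.factorial p : ℝ) / (2 * (N : ℝ) ^ (p - 1))) *
      ∑ S ∈ Finset.powersetCard p (Finset.univ : Finset (Fin N)), J S * ∏ i ∈ S, spin (σ i)
    - h * ∑ i, spin (σ i)

/-- The p-spin partition function. -/
def ZP (p N : ℕ) (β h : ℝ) (J : Finset (Fin N) → ℝ) : ℝ :=
  ∑ σ : Fin N → Bool, Real.exp (-(β * hamP p N h J σ))

/-- The p-spin quenched average `N⁻¹ E log Z_N^{(p)}(β, h, J)`. -/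
def quenchedFEP (p N : ℕ) (β h : ℝ) : ℝ :=
  (N : ℝ)⁻¹ * ∫ J, Real.log (ZP p N β h J) ∂gaussP N

/-- The functional order parameter on `[0, p/2]` as a function. -/
def xFunP (p K : ℕ) (q m : ℕ → ℝ) (r : ℝ) : ℝ :=
  if (p : ℝ) / 2 ≤ r then m K else m (sInf {a : ℕ | r < q a})

/-- The change of variables `q̄(r)` defined by `2r = p q̄^{p-1}`. -/
def qBar (p : ℕ) (r : ℝ) : ℝ := (2 * r / p) ^ (((p : ℝ) - 1)⁻¹)

/-- The p-spin trial function
`ᾱ_p(β, h; x) = log 2 + f(0, h; x, β) - (β²/2) ∫₀^{p/2} q̄(r) x(r) dr`. -/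
def trialAlphaP (p K : ℕ) (q m : ℕ → ℝ) (β h : ℝ) : ℝ :=
  Real.log 2 + parisiLevel K q m β K h
    - β ^ 2 / 2 * ∫ r in (0 : ℝ)..((p : ℝ) / 2), qBar p r * xFunP p K q m r

namespace GB

open scoped Topology

lemma integrable_exp_abs (c : ℝ) : Integrable (fun z : ℝ => Real.exp (c * |z|)) stdGauss := by
  unfold stdGauss
  exact integrable_exp_mul_abs (X := fun z : ℝ => z) (integrable_exp_mul_gaussianReal c)
    (by simpa using integrable_exp_mul_gaussianReal (μ := 0) (v := 1) (-c))

lemma abs_mul_exp_le (c z : ℝ) : |z| * Real.exp (c * |z|) ≤ Real.exp ((c + 1) * |z|) := by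
  rw [add_mul, Real.exp_add, mul_comm, one_mul]
  have := Real.add_one_le_exp |z|
  gcongr
  linarith

/-- Continuous functions of one variable with exponential growth are integrable. -/
lemma integrable_of_growth {ψ : ℝ → ℝ} (hc : Continuous ψ) {B b : ℝ}
    (hb : ∀ z, |ψ z| ≤ B * Real.exp (b * |z|)) : Integrable ψ stdGauss :=
  ((integrable_exp_abs b).const_mul B).mono' hc.aestronglyMeasurable
    (Eventually.of_forall fun z => by simpa [Real.norm_eq_abs] using hb z)

lemma integrable_id_mul_of_growth {ψ : ℝ → ℝ} (hc : Continuous ψ) {B b : ℝ}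
    (hb : ∀ z, |ψ z| ≤ B * Real.exp (b * |z|)) : Integrable (fun z => z * ψ z) stdGauss := by
  have hB : 0 ≤ B := by
    have := (abs_nonneg _).trans (hb 0)
    simpa using this
  refine integrable_of_growth (B := B) (b := b + 1) (by fun_prop) fun z => ?_
  rw [abs_mul]
  calc |z| * |ψ z| ≤ |z| * (B * Real.exp (b * |z|)) := by gcongr; exact hb z
    _ = B * (|z| * Real.exp (b * |z|)) := by ring
    _ ≤ _ := by gcongr; exact abs_mul_exp_le b z

lemma hasDerivAt_gpdf (z : ℝ) : HasDerivAt (gaussianPDFReal 0 1) (-z * gaussianPDFReal 0 1 z) z := by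
  unfold gaussianPDFReal
  have h1 : HasDerivAt (fun x : ℝ => -(x - 0) ^ 2 / (2 * ((1 : NNReal) : ℝ))) (-z) z := by
    have := (((hasDerivAt_id z).sub_const 0).pow 2).neg.div_const (2 * ((1 : NNReal) : ℝ))
    refine this.congr_deriv ?_
    simp
    ring
  have := (h1.exp).const_mul (Real.sqrt (2 * Real.pi * ((1 : NNReal) : ℝ)))⁻¹
  refine this.congr_deriv ?_
  ring

lemma integrable_gpdf_iff {ψ : ℝ → ℝ} (h : Integrable ψ stdGauss) :
    Integrable (fun z => gaussianPDFReal 0 1 z * ψ z) := by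
  unfold stdGauss at h
  rw [gaussianReal_of_var_ne_zero 0 one_ne_zero] at h
  rw [integrable_withDensity_iff_integrable_smul₀' (by fun_prop)
    (Eventually.of_forall fun _ => gaussianPDF_lt_top)] at h
  simpa [toReal_gaussianPDF] using h

/-- Gaussian integration by parts. -/
lemma gauss_ibp {ψ ψ' : ℝ → ℝ} (hd : ∀ z, HasDerivAt ψ (ψ' z) z) (hc' : Continuous ψ')
    {B b : ℝ} (hb : ∀ z, |ψ z| ≤ B * Real.exp (b * |z|))
    {B' b' : ℝ} (hb' : ∀ z, |ψ' z| ≤ B' * Real.exp (b' * |z|)) :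
    ∫ z, z * ψ z ∂stdGauss = ∫ z, ψ' z ∂stdGauss := by
  have hc : Continuous ψ := continuous_iff_continuousAt.2 fun z => (hd z).continuousAt
  have i1 := integrable_gpdf_iff (integrable_of_growth hc hb)
  have i2 := integrable_gpdf_iff (integrable_id_mul_of_growth hc hb)
  have i3 := integrable_gpdf_iff (integrable_of_growth hc' hb')
  unfold stdGauss
  rw [integral_gaussianReal_eq_integral_smul one_ne_zero,
    integral_gaussianReal_eq_integral_smul one_ne_zero]
  have := integral_mul_deriv_eq_deriv_mul_of_integrable (u := gaussianPDFReal 0 1) (v := ψ)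
    (u' := fun z => -z * gaussianPDFReal 0 1 z) (v' := ψ')
    (fun z _ => hasDerivAt_gpdf z) (fun z _ => hd z) i3
    (by
      refine i2.neg.congr (Eventually.of_forall fun z => ?_)
      simp only [Pi.neg_apply, Pi.mul_apply]; ring) i1
  simp only [smul_eq_mul]
  rw [this, ← integral_neg]
  congr 1; ext z; ring

set_option linter.unusedSectionVars false

variable {E : Type*} [NormedAddCommGroup E] [NormedSpace ℝ E]

/-- Scale functions: `sin` for the disorder, `cos` for the fields. -/
def sc (b : Bool) (θ : ℝ) : ℝ := if b then Real.sin θ else Real.cos θ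

def sc' (b : Bool) (θ : ℝ) : ℝ := if b then Real.cos θ else -Real.sin θ

lemma sc_hasDerivAt (b : Bool) (θ : ℝ) : HasDerivAt (sc b) (sc' b θ) θ := by
  cases b
  · exact Real.hasDerivAt_cos θ
  · exact Real.hasDerivAt_sin θ

lemma sc_abs (b : Bool) (θ : ℝ) : |sc b θ| ≤ 1 := by
  cases b
  · simpa [sc] using Real.abs_cos_le_one θ
  · simpa [sc] using Real.abs_sin_le_one θ

lemma sc'_abs (b : Bool) (θ : ℝ) : |sc' b θ| ≤ 1 := by
  cases b
  · simpa [sc'] using Real.abs_sin_le_one θ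
  · simpa [sc'] using Real.abs_cos_le_one θ

@[fun_prop]
lemma sc_cont (b : Bool) : Continuous (sc b) := by
  cases b
  · exact Real.continuous_cos
  · exact Real.continuous_sin

@[fun_prop]
lemma sc'_cont (b : Bool) : Continuous (sc' b) := by
  cases b
  · exact Real.continuous_sin.neg
  · exact Real.continuous_cos

/-- Continuous functions with exponential growth. -/
def EG (Φ : ℝ → E → ℝ) : Prop :=
  Continuous (fun p : ℝ × E => Φ p.1 p.2) ∧
    ∃ B b : ℝ, 0 ≤ B ∧ 0 ≤ b ∧ ∀ θ x, |Φ θ x| ≤ B * Real.exp (b * (|θ| + ‖x‖))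

lemma EG.of_bdd {Φ : ℝ → E → ℝ} (hc : Continuous (fun p : ℝ × E => Φ p.1 p.2)) {B : ℝ}
    (h : ∀ θ x, |Φ θ x| ≤ B) : EG Φ :=
  ⟨hc, B, 0, (abs_nonneg _).trans (h 0 0), le_rfl, fun θ x => by simpa using h θ x⟩

lemma EG.add {Φ Ψ : ℝ → E → ℝ} (h : EG Φ) (h' : EG Ψ) : EG (fun θ x => Φ θ x + Ψ θ x) := by
  obtain ⟨hc, B, b, hB, hb, hh⟩ := h
  obtain ⟨hc', B', b', hB', hb', hh'⟩ := h'
  refine ⟨hc.add hc', B + B', max b b', by positivity, le_max_of_le_left hb, fun θ x => ?_⟩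
  calc |Φ θ x + Ψ θ x| ≤ |Φ θ x| + |Ψ θ x| := abs_add_le _ _
    _ ≤ B * Real.exp (b * (|θ| + ‖x‖)) + B' * Real.exp (b' * (|θ| + ‖x‖)) :=
        add_le_add (hh θ x) (hh' θ x)
    _ ≤ B * Real.exp (max b b' * (|θ| + ‖x‖)) + B' * Real.exp (max b b' * (|θ| + ‖x‖)) := by
        gcongr
        · exact le_max_left _ _
        · exact le_max_right _ _
    _ = _ := by ring

lemma EG.mul {Φ Ψ : ℝ → E → ℝ} (h : EG Φ) (h' : EG Ψ) : EG (fun θ x => Φ θ x * Ψ θ x) := by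
  obtain ⟨hc, B, b, hB, hb, hh⟩ := h
  obtain ⟨hc', B', b', hB', hb', hh'⟩ := h'
  refine ⟨hc.mul hc', B * B', b + b', by positivity, by positivity, fun θ x => ?_⟩
  rw [abs_mul, add_mul, Real.exp_add]
  calc |Φ θ x| * |Ψ θ x| ≤ (B * Real.exp (b * (|θ| + ‖x‖))) * (B' * Real.exp (b' * (|θ| + ‖x‖))) :=
        mul_le_mul (hh θ x) (hh' θ x) (abs_nonneg _) (by positivity)
    _ = _ := by ring

lemma EG.const (c : ℝ) : EG (fun (_ : ℝ) (_ : E) => c) :=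
  EG.of_bdd (B := |c|) continuous_const fun _ _ => le_rfl

/-- The smoothing operator along the direction `v`. -/
def Lop (b : Bool) (v : E) (Φ : ℝ → E → ℝ) (θ : ℝ) (x : E) : ℝ :=
  ∫ z, Φ θ (x + (z * sc b θ) • v) ∂stdGauss

lemma EG.loc {Φ : ℝ → E → ℝ} (h : EG Φ) (v : E) (θ₀ : ℝ) (x₀ : E) (M : ℝ) :
    ∃ B b : ℝ, 0 ≤ B ∧ ∀ θ x z c, |θ| ≤ |θ₀| + M → ‖x‖ ≤ ‖x₀‖ + M → |c| ≤ 1 →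
      |Φ θ (x + (z * c) • v)| ≤ B * Real.exp (b * |z|) := by
  obtain ⟨hc, B, b, hB, hb, hh⟩ := h
  refine ⟨B * Real.exp (b * (|θ₀| + M + (‖x₀‖ + M))), b * ‖v‖, by positivity, ?_⟩
  intro θ x z c hθ hx hc1
  refine (hh _ _).trans ?_
  rw [mul_assoc, ← Real.exp_add]
  have : ‖x + (z * c) • v‖ ≤ ‖x₀‖ + M + ‖v‖ * |z| := by
    refine (norm_add_le _ _).trans (add_le_add hx ?_)
    rw [norm_smul, Real.norm_eq_abs, abs_mul, mul_comm]
    have : |z| * |c| ≤ |z| := mul_le_of_le_one_right (abs_nonneg _) hc1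
    gcongr
  have h2 : |θ| + ‖x + (z * c) • v‖ ≤ |θ₀| + M + (‖x₀‖ + M) + ‖v‖ * |z| := by linarith
  calc B * Real.exp (b * (|θ| + ‖x + (z * c) • v‖))
      ≤ B * Real.exp (b * (|θ₀| + M + (‖x₀‖ + M) + ‖v‖ * |z|)) := by gcongr
    _ = _ := by ring_nf

lemma EG.contz {Φ : ℝ → E → ℝ} (h : EG Φ) (v : E) (θ : ℝ) (x : E) (c : ℝ) :
    Continuous (fun z : ℝ => Φ θ (x + (z * c) • v)) :=
  h.1.comp (f := fun z : ℝ => (θ, x + (z * c) • v)) (by fun_prop)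

lemma EG.integrable {Φ : ℝ → E → ℝ} (h : EG Φ) (b : Bool) (v : E) (θ : ℝ) (x : E) :
    Integrable (fun z => Φ θ (x + (z * sc b θ) • v)) stdGauss := by
  obtain ⟨B, b', hB, hh⟩ := h.loc v θ x 0
  exact integrable_of_growth (h.contz v θ x _)
    fun z => hh θ x z _ (by simp) (by simp) (sc_abs b θ)

lemma Lop_continuous {Φ : ℝ → E → ℝ} (h : EG Φ) (b : Bool) (v : E) :
    Continuous (fun p : ℝ × E => Lop b v Φ p.1 p.2) := by
  rw [continuous_iff_continuousAt]
  rintro ⟨θ₀, x₀⟩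
  obtain ⟨B, b', hB, hh⟩ := h.loc v θ₀ x₀ 1
  unfold Lop
  refine continuousAt_of_dominated (bound := fun z => B * Real.exp (b' * |z|))
    (Eventually.of_forall fun p => (h.contz v p.1 p.2 _).aestronglyMeasurable) ?_
    ((integrable_exp_abs b').const_mul B) (Eventually.of_forall fun z => ?_)
  · filter_upwards [Metric.ball_mem_nhds (θ₀, x₀) one_pos] with p hp
    refine Eventually.of_forall fun z => ?_
    rw [Metric.mem_ball, Prod.dist_eq, max_lt_iff] at hp
    refine hh _ _ _ _ ?_ ?_ (sc_abs b _)
    · have := abs_sub_abs_le_abs_sub p.1 θ₀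
      have h2 := hp.1
      rw [Real.dist_eq] at h2
      simp only at h2
      linarith
    · have := norm_sub_norm_le p.2 x₀
      have h2 := hp.2
      rw [dist_eq_norm] at h2
      simp only at h2
      linarith
  · exact (h.1.comp (f := fun p : ℝ × E => (p.1, p.2 + (z * sc b p.1) • v))
      (by fun_prop)).continuousAt

/-- Directional derivative in the space variable. -/
def DX (u : E) (Φ Φ' : ℝ → E → ℝ) : Prop :=
  ∀ θ x, HasDerivAt (fun r : ℝ => Φ θ (x + r • u)) (Φ' θ x) 0

lemma DX.at {u : E} {Φ Φ' : ℝ → E → ℝ} (h : DX u Φ Φ') (θ : ℝ) (x : E) (r : ℝ) :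
    HasDerivAt (fun r : ℝ => Φ θ (x + r • u)) (Φ' θ (x + r • u)) r := by
  have h0 := h θ (x + r • u)
  have h1 : HasDerivAt (fun r' : ℝ => r' - r) 1 r := (hasDerivAt_id r).sub_const r
  have h2 := HasDerivAt.comp (h₂ := fun r' : ℝ => Φ θ (x + r • u + r' • u)) r
    (by simpa using h0) h1
  simp only [mul_one] at h2
  refine h2.congr_of_eventuallyEq (Eventually.of_forall fun r' => ?_)
  simp only [Function.comp]
  congr 1
  rw [add_assoc, ← add_smul]; congr 2; ring

lemma Lop_DX {u : E} {Φ Φ' : ℝ → E → ℝ} (h : EG Φ) (h' : EG Φ') (hd : DX u Φ Φ')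
    (b : Bool) (v : E) : DX u (Lop b v Φ) (Lop b v Φ') := by
  intro θ x
  obtain ⟨B, b', hB, hh⟩ := h'.loc v θ x ‖u‖
  unfold Lop
  have key := hasDerivAt_integral_of_dominated_loc_of_deriv_le (μ := stdGauss)
    (F := fun r z => Φ θ (x + r • u + (z * sc b θ) • v))
    (F' := fun r z => Φ' θ (x + r • u + (z * sc b θ) • v)) (x₀ := (0 : ℝ))
    (bound := fun z => B * Real.exp (b' * |z|)) (s := Metric.ball 0 1)
    (Metric.ball_mem_nhds _ one_pos)
    (Eventually.of_forall fun r => (h.contz v θ _ _).aestronglyMeasurable)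
    (h.integrable b v θ _) (h'.contz v θ _ _).aestronglyMeasurable
    (Eventually.of_forall fun z r hr => ?_) ((integrable_exp_abs b').const_mul B)
    (Eventually.of_forall fun z r hr => ?_)
  · simpa using key.2
  · refine hh _ _ _ _ (by simp) ?_ (sc_abs b θ)
    refine (norm_add_le _ _).trans ?_
    rw [norm_smul]
    have : ‖r‖ ≤ 1 := by
      have := Metric.mem_ball.1 hr
      rw [dist_zero_right] at this; exact this.le
    have := mul_le_of_le_one_left (norm_nonneg u) this
    linarith
  · have := hd.at θ (x + (z * sc b θ) • v) r
    simpa only [add_right_comm] using this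

/-- Derivative in the interpolation parameter. -/
def DT (Φ Φ' : ℝ → E → ℝ) : Prop := ∀ θ x, HasDerivAt (fun t => Φ t x) (Φ' θ x) θ

lemma DT.joint {v : E} {Φ Φ0 Φ1 : ℝ → E → ℝ} (h0 : EG Φ0) (h1 : EG Φ1)
    (hd0 : DT Φ Φ0) (hd1 : DX v Φ Φ1) (b : Bool) (z : ℝ) (x : E) (θ : ℝ) :
    HasDerivAt (fun t => Φ t (x + (z * sc b t) • v))
      (Φ0 θ (x + (z * sc b θ) • v) + z * sc' b θ * Φ1 θ (x + (z * sc b θ) • v)) θ := by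
  have cc : Continuous (fun p : ℝ × ℝ => (p.1, x + p.2 • v)) := by fun_prop
  have key := hasStrictFDerivAt_uncurry_coprod (𝕜 := ℝ) (u := (θ, z * sc b θ))
    (f := fun t r => Φ t (x + r • v))
    (f₁ := fun t r => ContinuousLinearMap.toSpanSingleton ℝ (Φ0 t (x + r • v)))
    (f₂ := fun t r => ContinuousLinearMap.toSpanSingleton ℝ (Φ1 t (x + r • v)))
    (Eventually.of_forall fun p => (hd0 p.1 (x + p.2 • v)).hasFDerivAt)
    (Eventually.of_forall fun p => (hd1.at p.1 x p.2).hasFDerivAt)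
    (by
      have := (ContinuousLinearMap.toSpanSingletonCLE (𝕜 := ℝ) (E := ℝ)).continuous.comp
        (h0.1.comp cc)
      exact this.continuousAt)
    (by
      have := (ContinuousLinearMap.toSpanSingletonCLE (𝕜 := ℝ) (E := ℝ)).continuous.comp
        (h1.1.comp cc)
      exact this.continuousAt)
  have hcurve : HasDerivAt (fun t => (t, z * sc b t)) (1, z * sc' b θ) θ :=
    (hasDerivAt_id θ).prodMk ((sc_hasDerivAt b θ).const_mul z)
  have := key.hasFDerivAt.comp_hasDerivAt (f := fun t => (t, z * sc b t)) θ hcurve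
  refine this.congr_deriv ?_
  simp [Function.HasUncurry.uncurry]

lemma Lop_DT {v : E} {Φ Φ0 Φ1 Φ2 : ℝ → E → ℝ} (h : EG Φ) (h0 : EG Φ0) (h1 : EG Φ1) (h2 : EG Φ2)
    (hd0 : DT Φ Φ0) (hd1 : DX v Φ Φ1) (hd2 : DX v Φ1 Φ2) (b : Bool) :
    DT (Lop b v Φ) (fun θ x => Lop b v Φ0 θ x + sc b θ * sc' b θ * Lop b v Φ2 θ x) := by
  intro θ x
  obtain ⟨B0, b0, hB0, hh0⟩ := h0.loc v θ x 1
  obtain ⟨B1, b1, hB1, hh1⟩ := h1.loc v θ x 1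
  obtain ⟨B2, b2, hB2, hh2⟩ := h2.loc v θ x 1
  have key := hasDerivAt_integral_of_dominated_loc_of_deriv_le (μ := stdGauss)
    (F := fun t z => Φ t (x + (z * sc b t) • v))
    (F' := fun t z => Φ0 t (x + (z * sc b t) • v) + z * sc' b t * Φ1 t (x + (z * sc b t) • v))
    (x₀ := θ)
    (bound := fun z => B0 * Real.exp (b0 * |z|) + B1 * Real.exp ((b1 + 1) * |z|))
    (s := Metric.ball θ 1)
    (Metric.ball_mem_nhds _ one_pos)
    (Eventually.of_forall fun r => (h.contz v _ _ _).aestronglyMeasurable)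
    (h.integrable b v θ _)
    (((h0.contz v θ _ _).add ((continuous_id.mul continuous_const).mul
      (h1.contz v θ _ _))).aestronglyMeasurable)
    (Eventually.of_forall fun z t ht => ?_)
    (((integrable_exp_abs b0).const_mul B0).add ((integrable_exp_abs (b1 + 1)).const_mul B1))
    (Eventually.of_forall fun z t ht => DT.joint h0 h1 hd0 hd1 b z x t)
  · have hh := key.2
    unfold Lop
    refine hh.congr_deriv ?_
    have e1 : ∀ z, z * sc' b θ * Φ1 θ (x + (z * sc b θ) • v)
        = sc' b θ * (z * Φ1 θ (x + (z * sc b θ) • v)) := fun z => by ring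
    have hbd1 : ∀ z, |Φ1 θ (x + (z * sc b θ) • v)| ≤ B1 * Real.exp (b1 * |z|) := fun z =>
      hh1 θ x z _ (by simp) (by simp) (sc_abs b θ)
    have hbd2 : ∀ z, |sc b θ * Φ2 θ (x + (z * sc b θ) • v)| ≤ B2 * Real.exp (b2 * |z|) := fun z => by
      rw [abs_mul]
      exact (mul_le_of_le_one_left (abs_nonneg _) (sc_abs b θ)).trans
        (hh2 θ x z _ (by simp) (by simp) (sc_abs b θ))
    have ibp := gauss_ibp (ψ := fun z => Φ1 θ (x + (z * sc b θ) • v))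
      (ψ' := fun z => sc b θ * Φ2 θ (x + (z * sc b θ) • v))
      (fun z => by
        have a1 := hd2.at θ x (z * sc b θ)
        have a2 : HasDerivAt (fun z : ℝ => z * sc b θ) (sc b θ) z := by
          simpa using (hasDerivAt_id z).mul_const (sc b θ)
        have := HasDerivAt.comp (h₂ := fun r : ℝ => Φ1 θ (x + r • v)) z a1 a2
        rw [mul_comm] at this
        exact this)
      (continuous_const.mul (h2.contz v θ _ _)) hbd1 hbd2
    rw [integral_add (h0.integrable b v θ x)]
    · simp_rw [e1]
      rw [integral_const_mul, ibp, integral_const_mul]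
      ring
    · simp_rw [e1]
      exact (integrable_id_mul_of_growth (h1.contz v θ _ _) hbd1).const_mul _
  · have ht1 : |t| ≤ |θ| + 1 := by
      have h2 := Metric.mem_ball.1 ht
      have := abs_sub_abs_le_abs_sub t θ
      rw [Real.dist_eq] at h2
      linarith
    have a0 := hh0 t x z _ ht1 (by simp) (sc_abs b t)
    have a1 := hh1 t x z _ ht1 (by simp) (sc_abs b t)
    rw [Real.norm_eq_abs]
    refine (abs_add_le _ _).trans (add_le_add a0 ?_)
    rw [abs_mul, abs_mul]
    calc |z| * |sc' b t| * |Φ1 t (x + (z * sc b t) • v)|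
        ≤ |z| * 1 * (B1 * Real.exp (b1 * |z|)) := by
          gcongr
          exact sc'_abs b t
      _ = B1 * (|z| * Real.exp (b1 * |z|)) := by ring
      _ ≤ _ := by gcongr; exact abs_mul_exp_le _ _

end GB

namespace GB

open scoped Topology

set_option linter.unusedSectionVars false

variable {ι : Type*} [Fintype ι] [DecidableEq ι]

/-- A function together with its relevant derivatives. -/
structure Jet (ι : Type*) where
  F : ℝ → (ι → ℝ) → ℝ
  F0 : ℝ → (ι → ℝ) → ℝ
  F1 : (ι → ℝ) → ℝ → (ι → ℝ) → ℝ
  F2 : (ι → ℝ) → ℝ → (ι → ℝ) → ℝ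

/-- The regularity properties propagated through the recursion. -/
structure Jet.Ok (J : Jet ι) : Prop where
  c : Continuous (fun p : ℝ × (ι → ℝ) => J.F p.1 p.2)
  c0 : Continuous (fun p : ℝ × (ι → ℝ) => J.F0 p.1 p.2)
  c1 : ∀ u, Continuous (fun p : ℝ × (ι → ℝ) => J.F1 u p.1 p.2)
  c2 : ∀ u, Continuous (fun p : ℝ × (ι → ℝ) => J.F2 u p.1 p.2)
  d0 : DT J.F J.F0
  d1 : ∀ u, DX u J.F (J.F1 u)
  d2 : ∀ u, DX u (J.F1 u) (J.F2 u)
  b0 : ∃ A, ∀ θ x, |J.F0 θ x| ≤ A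
  b2 : ∀ u, ∃ A, ∀ θ x, |J.F2 u θ x| ≤ A
  lin : ∀ u θ x, J.F1 u θ x = ∑ i, J.F1 (Pi.single i 1) θ x * u i
  pos : ∀ i θ x, 0 ≤ J.F1 (Pi.single i 1) θ x
  one : ∀ θ x, ∑ i, J.F1 (Pi.single i 1) θ x = 1

namespace Jet.Ok

variable {J : Jet ι}

lemma b1 (h : J.Ok) (u : ι → ℝ) (θ : ℝ) (x : ι → ℝ) : |J.F1 u θ x| ≤ ‖u‖ := by
  rw [h.lin]
  calc |∑ i, J.F1 (Pi.single i 1) θ x * u i| ≤ ∑ i, |J.F1 (Pi.single i 1) θ x * u i| :=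
        Finset.abs_sum_le_sum_abs _ _
    _ ≤ ∑ i, J.F1 (Pi.single i 1) θ x * ‖u‖ := by
        refine Finset.sum_le_sum fun i _ => ?_
        rw [abs_mul, abs_of_nonneg (h.pos i θ x)]
        exact mul_le_mul_of_nonneg_left (norm_le_pi_norm u i) (h.pos i θ x)
    _ = ‖u‖ := by rw [← Finset.sum_mul, h.one, one_mul]

lemma lipx (h : J.Ok) (θ : ℝ) (x y : ι → ℝ) : |J.F θ x - J.F θ y| ≤ ‖x - y‖ := by
  have key := Convex.norm_image_sub_le_of_norm_hasDerivWithin_le (s := Set.univ)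
    (f := fun r : ℝ => J.F θ (y + r • (x - y))) (f' := fun r => J.F1 (x - y) θ (y + r • (x - y)))
    (C := ‖x - y‖) (x := 0) (y := 1)
    (fun r _ => ((h.d1 (x - y)).at θ y r).hasDerivWithinAt)
    (fun r _ => by rw [Real.norm_eq_abs]; exact h.b1 _ _ _) convex_univ trivial trivial
  simpa using key

lemma growth (h : J.Ok) : ∃ A B, 0 ≤ A ∧ 0 ≤ B ∧ ∀ θ x, |J.F θ x| ≤ A + B * (|θ| + ‖x‖) := by
  obtain ⟨A0, hA0⟩ := h.b0
  have hA0' : 0 ≤ A0 := (abs_nonneg _).trans (hA0 0 0)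
  refine ⟨|J.F 0 0|, A0 + 1, abs_nonneg _, by positivity, fun θ x => ?_⟩
  have h1 := h.lipx θ x 0
  have h2 := Convex.norm_image_sub_le_of_norm_hasDerivWithin_le (s := Set.univ)
    (f := fun t : ℝ => J.F t 0) (f' := fun t => J.F0 t 0)
    (C := A0) (x := 0) (y := θ)
    (fun r _ => (h.d0 r 0).hasDerivWithinAt)
    (fun r _ => by rw [Real.norm_eq_abs]; exact hA0 _ _) convex_univ trivial trivial
  simp only [Real.norm_eq_abs, sub_zero] at h1 h2
  have e : J.F θ x = J.F 0 0 + (J.F θ 0 - J.F 0 0) + (J.F θ x - J.F θ 0) := by ring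
  have h3 : |J.F θ x| ≤ |J.F 0 0| + |J.F θ 0 - J.F 0 0| + |J.F θ x - J.F θ 0| := by
    conv_lhs => rw [e]
    exact abs_add_three _ _ _
  have := norm_nonneg x
  have := abs_nonneg θ
  nlinarith

lemma eg (h : J.Ok) : EG J.F := by
  obtain ⟨A, B, hA, hB, hh⟩ := h.growth
  refine ⟨h.c, Real.exp A, B, by positivity, hB, fun θ x => (hh θ x).trans ?_⟩
  rw [← Real.exp_add]
  have := Real.add_one_le_exp (A + B * (|θ| + ‖x‖))
  linarith

lemma egW (h : J.Ok) (m : ℝ) : EG (fun θ x => Real.exp (m * J.F θ x)) := by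
  obtain ⟨A, B, hA, hB, hh⟩ := h.growth
  refine ⟨Real.continuous_exp.comp (continuous_const.mul h.c), Real.exp (|m| * A), |m| * B,
    by positivity, by positivity, fun θ x => ?_⟩
  rw [← Real.exp_add, abs_of_pos (Real.exp_pos _)]
  refine Real.exp_le_exp.2 ?_
  calc m * J.F θ x ≤ |m * J.F θ x| := le_abs_self _
    _ = |m| * |J.F θ x| := abs_mul _ _
    _ ≤ |m| * (A + B * (|θ| + ‖x‖)) := by gcongr; exact hh θ x
    _ = _ := by ring

lemma eg0 (h : J.Ok) : EG J.F0 := by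
  obtain ⟨A, hA⟩ := h.b0
  exact EG.of_bdd h.c0 hA

lemma eg1 (h : J.Ok) (u : ι → ℝ) : EG (J.F1 u) := EG.of_bdd (h.c1 u) (h.b1 u)

lemma eg2 (h : J.Ok) (u : ι → ℝ) : EG (J.F2 u) := by
  obtain ⟨A, hA⟩ := h.b2 u
  exact EG.of_bdd (h.c2 u) hA

end Jet.Ok

/-- The partition function of the tilted Gaussian measure. -/
def ZZ (m : ℝ) (b : Bool) (v : ι → ℝ) (J : Jet ι) : ℝ → (ι → ℝ) → ℝ :=
  Lop b v (fun θ x => Real.exp (m * J.F θ x))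

/-- The tilted Gaussian average. -/
def EV (m : ℝ) (b : Bool) (v : ι → ℝ) (J : Jet ι) (X : ℝ → (ι → ℝ) → ℝ) (θ : ℝ) (x : ι → ℝ) : ℝ :=
  Lop b v (fun θ x => X θ x * Real.exp (m * J.F θ x)) θ x / ZZ m b v J θ x

lemma ZZ_pos {J : Jet ι} (h : J.Ok) (m : ℝ) (b : Bool) (v : ι → ℝ) (θ : ℝ) (x : ι → ℝ) :
    0 < ZZ m b v J θ x :=
  integral_exp_pos ((h.egW m).integrable b v θ x)

lemma Lop_add {Φ Ψ : ℝ → (ι → ℝ) → ℝ} (h : EG Φ) (h' : EG Ψ) (b : Bool) (v : ι → ℝ) (θ : ℝ)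
    (x : ι → ℝ) : Lop b v (fun θ x => Φ θ x + Ψ θ x) θ x = Lop b v Φ θ x + Lop b v Ψ θ x :=
  integral_add (h.integrable b v θ x) (h'.integrable b v θ x)

lemma Lop_smul (Φ : ℝ → (ι → ℝ) → ℝ) (c : ℝ) (b : Bool) (v : ι → ℝ) (θ : ℝ)
    (x : ι → ℝ) : Lop b v (fun θ x => c * Φ θ x) θ x = c * Lop b v Φ θ x :=
  integral_const_mul _ _

section EVlemmas
variable {J : Jet ι} (h : J.Ok) (m : ℝ) (b : Bool) (v : ι → ℝ)

lemma EV_cont (h : J.Ok) (m : ℝ) (b : Bool) (v : ι → ℝ) {X : ℝ → (ι → ℝ) → ℝ} (hX : EG X) :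
    Continuous (fun p : ℝ × (ι → ℝ) => EV m b v J X p.1 p.2) :=
  (Lop_continuous (hX.mul (h.egW m)) b v).div (Lop_continuous (h.egW m) b v)
    fun p => (ZZ_pos h m b v p.1 p.2).ne'

lemma EV_add (h : J.Ok) (m : ℝ) (b : Bool) (v : ι → ℝ) {X Y : ℝ → (ι → ℝ) → ℝ} (hX : EG X)
    (hY : EG Y) (θ : ℝ) (x : ι → ℝ) :
    EV m b v J (fun θ x => X θ x + Y θ x) θ x = EV m b v J X θ x + EV m b v J Y θ x := by
  unfold EV
  rw [← add_div, ← Lop_add (hX.mul (h.egW m)) (hY.mul (h.egW m))]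
  simp only [add_mul]

lemma EV_smul (m : ℝ) (b : Bool) (v : ι → ℝ) (X : ℝ → (ι → ℝ) → ℝ) (c : ℝ) (θ : ℝ) (x : ι → ℝ) :
    EV m b v J (fun θ x => c * X θ x) θ x = c * EV m b v J X θ x := by
  unfold EV
  rw [← mul_div_assoc, ← Lop_smul]
  simp only [mul_assoc]

lemma EV_le (h : J.Ok) (m : ℝ) (b : Bool) (v : ι → ℝ) {X : ℝ → (ι → ℝ) → ℝ} (hX : EG X) (c θ : ℝ)
    (hc : ∀ x, X θ x ≤ c) (x : ι → ℝ) : EV m b v J X θ x ≤ c := by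
  unfold EV
  rw [div_le_iff₀ (ZZ_pos h m b v θ x)]
  unfold ZZ
  rw [← Lop_smul]
  refine integral_mono ((hX.mul (h.egW m)).integrable b v θ x)
    (((h.egW m).integrable b v θ x).const_mul c) fun z => ?_
  exact mul_le_mul_of_nonneg_right (hc _) (Real.exp_pos _).le

lemma EV_nonneg (h : J.Ok) (m : ℝ) (b : Bool) (v : ι → ℝ) {X : ℝ → (ι → ℝ) → ℝ} (θ : ℝ)
    (hc : ∀ x, 0 ≤ X θ x) (x : ι → ℝ) : 0 ≤ EV m b v J X θ x :=
  div_nonneg (integral_nonneg fun _ => mul_nonneg (hc _) (Real.exp_pos _).le)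
    (ZZ_pos h m b v θ x).le

lemma EV_abs_le (h : J.Ok) (m : ℝ) (b : Bool) (v : ι → ℝ) {X : ℝ → (ι → ℝ) → ℝ} (hX : EG X)
    (c θ : ℝ) (hc : ∀ x, |X θ x| ≤ c) (x : ι → ℝ) : |EV m b v J X θ x| ≤ c := by
  rw [abs_le']
  refine ⟨EV_le h m b v hX c θ (fun x => (le_abs_self _).trans (hc x)) x, ?_⟩
  have := EV_le h m b v ((EG.const (-1)).mul hX) c θ
    (fun x => by have := (neg_le_abs _).trans (hc x); linarith) x
  rw [EV_smul] at this
  linarith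

lemma EV_one (h : J.Ok) (m : ℝ) (b : Bool) (v : ι → ℝ) (θ : ℝ) (x : ι → ℝ) :
    EV m b v J (fun _ _ => 1) θ x = 1 := by
  unfold EV
  simp only [one_mul]
  exact div_self (ZZ_pos h m b v θ x).ne'

lemma EV_sum (h : J.Ok) (m : ℝ) (b : Bool) (v : ι → ℝ) {κ : Type*} (s : Finset κ)
    (X : κ → ℝ → (ι → ℝ) → ℝ)
    (hX : ∀ k, EG (X k)) (θ : ℝ) (x : ι → ℝ) :
    EV m b v J (fun θ x => ∑ k ∈ s, X k θ x) θ x = ∑ k ∈ s, EV m b v J (X k) θ x ∧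
      EG (fun θ x => ∑ k ∈ s, X k θ x) := by
  classical
  induction s using Finset.induction_on with
  | empty => simpa [EV, Lop] using EG.const (E := ι → ℝ) 0
  | insert a s ha ih =>
    simp only [Finset.sum_insert ha]
    exact ⟨by rw [EV_add h m b v (hX a) ih.2, ih.1], (hX a).add ih.2⟩

end EVlemmas

/-- One step of the recursion, on jets. -/
def step (m : ℝ) (b : Bool) (v : ι → ℝ) (J : Jet ι) : Jet ι where
  F θ x := if m = 0 then Lop b v J.F θ x else m⁻¹ * Real.log (ZZ m b v J θ x)
  F0 θ x := EV m b v J J.F0 θ x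
    + sc b θ * sc' b θ * EV m b v J (fun θ x => J.F2 v θ x + m * J.F1 v θ x ^ 2) θ x
  F1 u := EV m b v J (J.F1 u)
  F2 u θ x := EV m b v J (fun θ x => J.F2 u θ x + m * J.F1 u θ x ^ 2) θ x
    - m * EV m b v J (J.F1 u) θ x ^ 2

lemma Jet.Ok.egQ {J : Jet ι} (h : J.Ok) (m : ℝ) (u : ι → ℝ) :
    EG (fun θ x => J.F2 u θ x + m * J.F1 u θ x ^ 2) := by
  have := (h.eg2 u).add ((EG.const m).mul ((h.eg1 u).mul (h.eg1 u)))
  simpa only [sq] using this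

lemma Jet.Ok.bQ {J : Jet ι} (h : J.Ok) (m : ℝ) (u : ι → ℝ) :
    ∃ A, ∀ θ x, |J.F2 u θ x + m * J.F1 u θ x ^ 2| ≤ A := by
  obtain ⟨A, hA⟩ := h.b2 u
  refine ⟨A + |m| * ‖u‖ ^ 2, fun θ x => (abs_add_le _ _).trans (add_le_add (hA θ x) ?_)⟩
  rw [abs_mul, abs_pow]
  gcongr
  exact h.b1 u θ x

lemma Jet.Ok.dxW {J : Jet ι} (h : J.Ok) (m : ℝ) (u : ι → ℝ) :
    DX u (fun θ x => Real.exp (m * J.F θ x)) (fun θ x => m * (J.F1 u θ x * Real.exp (m * J.F θ x))) := by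
  intro θ x
  have := ((h.d1 u θ x).const_mul m).exp
  refine this.congr_deriv ?_
  simp
  ring

lemma Jet.Ok.dxFW {J : Jet ι} (h : J.Ok) (m : ℝ) (u : ι → ℝ) :
    DX u (fun θ x => J.F1 u θ x * Real.exp (m * J.F θ x))
      (fun θ x => (J.F2 u θ x + m * J.F1 u θ x ^ 2) * Real.exp (m * J.F θ x)) := by
  intro θ x
  have := (h.d2 u θ x).mul (h.dxW m u θ x)
  refine this.congr_deriv ?_
  simp
  ring

lemma step_ok {J : Jet ι} (h : J.Ok) (m : ℝ) (b : Bool) (v : ι → ℝ) : (step m b v J).Ok := by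
  have hZ := ZZ_pos h m b v
  have cZ : Continuous (fun p : ℝ × (ι → ℝ) => ZZ m b v J p.1 p.2) :=
    Lop_continuous (h.egW m) b v
  have dZ : ∀ u, DX u (ZZ m b v J)
      (fun θ x => m * Lop b v (fun θ x => J.F1 u θ x * Real.exp (m * J.F θ x)) θ x) := by
    intro u
    have := Lop_DX (h.egW m) ((EG.const m).mul ((h.eg1 u).mul (h.egW m))) (h.dxW m u) b v
    intro θ x
    refine (this θ x).congr_deriv ?_
    rw [Lop_smul]
  refine ⟨?_, ?_, ?_, ?_, ?_, ?_, ?_, ?_, ?_, ?_, ?_, ?_⟩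
  · -- c
    by_cases hm : m = 0
    · simp only [step, hm, if_true]
      exact Lop_continuous h.eg b v
    · simp only [step, hm, if_false]
      exact continuous_const.mul (cZ.log fun p => (hZ p.1 p.2).ne')
  · -- c0
    exact (EV_cont h m b v h.eg0).add (((by fun_prop : Continuous fun p : ℝ × (ι → ℝ) =>
      sc b p.1 * sc' b p.1)).mul (EV_cont h m b v (h.egQ m v)))
  · exact fun u => EV_cont h m b v (h.eg1 u)
  · exact fun u => (EV_cont h m b v (h.egQ m u)).sub
      (continuous_const.mul ((EV_cont h m b v (h.eg1 u)).pow 2))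
  · -- d0
    intro θ x
    by_cases hm : m = 0
    · have := Lop_DT h.eg h.eg0 (h.eg1 v) (h.eg2 v) h.d0 (h.d1 v) (h.d2 v) b θ x
      simp only [step, hm, if_true]
      refine this.congr_deriv ?_
      simp [EV, ZZ, Lop]
    · simp only [step, hm, if_false]
      have h1 : DX v (fun θ x => m * (J.F1 v θ x * Real.exp (m * J.F θ x)))
          (fun θ x => m * ((J.F2 v θ x + m * J.F1 v θ x ^ 2) * Real.exp (m * J.F θ x))) :=
        fun θ x => (h.dxFW m v θ x).const_mul m
      have h0 : DT (fun θ x => Real.exp (m * J.F θ x))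
          (fun θ x => m * (J.F0 θ x * Real.exp (m * J.F θ x))) := by
        intro θ x
        refine ((h.d0 θ x).const_mul m).exp.congr_deriv ?_
        ring
      have key := Lop_DT (h.egW m) ((EG.const m).mul (h.eg0.mul (h.egW m)))
        ((EG.const m).mul ((h.eg1 v).mul (h.egW m)))
        ((EG.const m).mul ((h.egQ m v).mul (h.egW m))) h0 (h.dxW m v) h1 b θ x
      have := (HasDerivAt.log key (hZ θ x).ne').const_mul m⁻¹
      refine this.congr_deriv ?_
      beta_reduce
      rw [Lop_smul, Lop_smul]
      unfold EV
      change m⁻¹ * (_ / ZZ m b v J θ x) = _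
      have := (hZ θ x).ne'
      field_simp
  · -- d1
    intro u θ x
    by_cases hm : m = 0
    · have := Lop_DX h.eg (h.eg1 u) (h.d1 u) b v θ x
      simp only [step, hm, if_true]
      refine this.congr_deriv ?_
      simp [EV, ZZ, Lop]
    · simp only [step, hm, if_false]
      have := (HasDerivAt.log (dZ u θ x) (by simpa using (hZ θ x).ne')).const_mul m⁻¹
      refine this.congr_deriv ?_
      simp only [zero_smul, add_zero]
      unfold EV
      have := (hZ θ x).ne'
      field_simp
  · -- d2
    intro u θ x
    have k1 := Lop_DX ((h.eg1 u).mul (h.egW m)) ((h.egQ m u).mul (h.egW m)) (h.dxFW m u) b v θ x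
    have := k1.div (dZ u θ x) (by simpa using (hZ θ x).ne')
    refine this.congr_deriv ?_
    simp only [zero_smul, add_zero, step]
    unfold EV
    have := (hZ θ x).ne'
    field_simp
  · -- b0
    obtain ⟨A, hA⟩ := h.b0
    obtain ⟨A', hA'⟩ := h.bQ m v
    have hA'0 : 0 ≤ A' := (abs_nonneg _).trans (hA' 0 0)
    refine ⟨A + 1 * 1 * A', fun θ x => (abs_add_le _ _).trans (add_le_add
      (EV_abs_le h m b v h.eg0 A θ (hA θ) x) ?_)⟩
    rw [abs_mul, abs_mul]
    gcongr
    · exact sc_abs b θ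
    · exact sc'_abs b θ
    · exact EV_abs_le h m b v (h.egQ m v) A' θ (hA' θ) x
  · intro u
    obtain ⟨A', hA'⟩ := h.bQ m u
    refine ⟨A' + |m| * ‖u‖ ^ 2, fun θ x => (abs_sub _ _).trans (add_le_add
      (EV_abs_le h m b v (h.egQ m u) A' θ (hA' θ) x) ?_)⟩
    rw [abs_mul, abs_pow]
    gcongr
    exact EV_abs_le h m b v (h.eg1 u) _ θ (h.b1 u θ) x
  · -- lin
    intro u θ x
    have e : J.F1 u = fun θ x => ∑ i, u i * J.F1 (Pi.single i 1) θ x := by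
      ext θ x; rw [h.lin]; simp only [mul_comm]
    simp only [step]
    conv_lhs => rw [e]
    rw [(EV_sum h m b v Finset.univ (fun i θ x => u i * J.F1 (Pi.single i 1) θ x)
      (fun i => (EG.const (u i)).mul (h.eg1 _)) θ x).1]
    refine Finset.sum_congr rfl fun i _ => ?_
    rw [EV_smul, mul_comm]
  · exact fun i θ x => EV_nonneg h m b v θ (h.pos i θ) x
  · intro θ x
    simp only [step]
    rw [← (EV_sum h m b v Finset.univ (fun i => J.F1 (Pi.single i 1)) (fun i => h.eg1 _) θ x).1]
    simp only [h.one]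
    exact EV_one h m b v θ x

/-- The half-derivative of the squared scale. -/
def rho (b : Bool) (θ : ℝ) : ℝ := sc b θ * sc' b θ

/-- The generator functional attached to a list of outer levels. -/
def Gen (J : Jet ι) (P : List (Bool × (ι → ℝ))) (m θ : ℝ) (x : ι → ℝ) : ℝ :=
  J.F0 θ x + (P.map fun l => rho l.1 θ * (J.F2 l.2 θ x + m * J.F1 l.2 θ x ^ 2)).sum

lemma Gen_eg {J : Jet ι} (h : J.Ok) (P : List (Bool × (ι → ℝ))) (m : ℝ) : EG (Gen J P m) := by
  induction P with
  | nil =>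
    have e : Gen J [] m = J.F0 := by ext θ x; simp [Gen]
    rw [e]; exact h.eg0
  | cons l P ih =>
    have h1 : EG (fun (θ : ℝ) (_ : ι → ℝ) => rho l.1 θ) := by
      refine EG.of_bdd (B := 1) ?_ fun θ x => ?_
      · unfold rho; fun_prop
      · unfold rho; rw [abs_mul]; exact mul_le_one₀ (sc_abs _ _) (abs_nonneg _) (sc'_abs _ _)
    have := ih.add (h1.mul (h.egQ m l.2))
    refine Eq.subst ?_ this
    ext θ x
    simp only [Gen, List.map_cons, List.sum_cons]
    ring

lemma Lop_thetamul (Φ : ℝ → (ι → ℝ) → ℝ) (c : ℝ → ℝ) (b : Bool) (v : ι → ℝ) (θ : ℝ)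
    (x : ι → ℝ) : Lop b v (fun θ x => c θ * Φ θ x) θ x = c θ * Lop b v Φ θ x :=
  integral_const_mul _ _

lemma EV_thetamul (J : Jet ι) (m : ℝ) (b : Bool) (v : ι → ℝ) (X : ℝ → (ι → ℝ) → ℝ) (c : ℝ → ℝ)
    (θ : ℝ) (x : ι → ℝ) :
    EV m b v J (fun θ x => c θ * X θ x) θ x = c θ * EV m b v J X θ x := by
  unfold EV
  rw [← mul_div_assoc, ← Lop_thetamul]
  simp only [mul_assoc]

lemma Gen_step_eq {J : Jet ι} (h : J.Ok) (P : List (Bool × (ι → ℝ))) (m : ℝ) (b : Bool) (v : ι → ℝ)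
    (θ : ℝ) (x : ι → ℝ) :
    Gen (step m b v J) P m θ x = EV m b v J (Gen J ((b, v) :: P) m) θ x := by
  induction P with
  | nil =>
    have h1 : EG (fun (θ : ℝ) (_ : ι → ℝ) => rho b θ) := by
      refine EG.of_bdd (B := 1) ?_ fun θ x => ?_
      · unfold rho; fun_prop
      · unfold rho; rw [abs_mul]; exact mul_le_one₀ (sc_abs _ _) (abs_nonneg _) (sc'_abs _ _)
    have e : Gen J [(b, v)] m = fun θ x => J.F0 θ x
        + rho b θ * (J.F2 v θ x + m * J.F1 v θ x ^ 2) := by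
      ext θ x; simp [Gen]
    rw [e, EV_add h m b v h.eg0 (h1.mul (h.egQ m v)), EV_thetamul]
    simp [Gen, step, rho]
  | cons l P ih =>
    have h1 : EG (fun (θ : ℝ) (_ : ι → ℝ) => rho l.1 θ) := by
      refine EG.of_bdd (B := 1) ?_ fun θ x => ?_
      · unfold rho; fun_prop
      · unfold rho; rw [abs_mul]; exact mul_le_one₀ (sc_abs _ _) (abs_nonneg _) (sc'_abs _ _)
    have e : Gen J ((b, v) :: l :: P) m = fun θ x => Gen J ((b, v) :: P) m θ x
        + rho l.1 θ * (J.F2 l.2 θ x + m * J.F1 l.2 θ x ^ 2) := by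
      ext θ x; simp [Gen]; ring
    rw [e, EV_add h m b v (Gen_eg h _ m) (h1.mul (h.egQ m l.2)), EV_thetamul, ← ih]
    simp only [Gen, List.map_cons, List.sum_cons, step]
    ring

/-- Apply a block of steps. -/
def steps (m : ℝ) (L : List (Bool × (ι → ℝ))) (J : Jet ι) : Jet ι :=
  L.foldl (fun J l => step m l.1 l.2 J) J

lemma steps_ok {J : Jet ι} (h : J.Ok) (m : ℝ) (L : List (Bool × (ι → ℝ))) : (steps m L J).Ok := by
  induction L generalizing J with
  | nil => exact h
  | cons l L ih => exact ih (step_ok h m l.1 l.2)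

lemma Gen_steps_le {J : Jet ι} (h : J.Ok) (m : ℝ) (L P : List (Bool × (ι → ℝ))) (θ κ : ℝ)
    (hκ : ∀ x, Gen J (L ++ P) m θ x ≤ κ) (x : ι → ℝ) : Gen (steps m L J) P m θ x ≤ κ := by
  induction L generalizing J with
  | nil => exact hκ x
  | cons l L ih =>
    refine ih (step_ok h m l.1 l.2) fun x => ?_
    rw [Gen_step_eq h]
    exact EV_le h m l.1 l.2 (Gen_eg h _ m) κ θ hκ x

lemma Gen_change (J : Jet ι) (P : List (Bool × (ι → ℝ))) (m m' θ : ℝ) (x : ι → ℝ) :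
    Gen J P m' θ x = Gen J P m θ x
      - (m - m') * (P.map fun l => rho l.1 θ * J.F1 l.2 θ x ^ 2).sum := by
  induction P with
  | nil => simp [Gen]
  | cons l P ih =>
    simp only [Gen, List.map_cons, List.sum_cons] at ih ⊢
    linear_combination ih

end GB

namespace GB

open scoped Topology

section base

set_option linter.unusedSectionVars false

variable {ι : Type*} [Fintype ι] [DecidableEq ι] [Nonempty ι]

/-- The Gibbs average. -/
def gav (x w : ι → ℝ) : ℝ := (∑ i, Real.exp (x i) * w i) / ∑ i, Real.exp (x i)

lemma sumexp_pos (x : ι → ℝ) : 0 < ∑ i, Real.exp (x i) :=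
  Finset.sum_pos (fun _ _ => Real.exp_pos _) Finset.univ_nonempty

lemma gav_abs_le (x w : ι → ℝ) (C : ℝ) (hC : ∀ i, |w i| ≤ C) : |gav x w| ≤ C := by
  unfold gav
  rw [abs_div, abs_of_pos (sumexp_pos x), div_le_iff₀ (sumexp_pos x), Finset.mul_sum]
  refine (Finset.abs_sum_le_sum_abs _ _).trans (Finset.sum_le_sum fun i _ => ?_)
  rw [abs_mul, abs_of_pos (Real.exp_pos _), mul_comm]
  exact mul_le_mul_of_nonneg_right (hC i) (Real.exp_pos _).le

lemma gav_cont (w : ι → ℝ) : Continuous (fun p : ℝ × (ι → ℝ) => gav p.2 w) := by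
  unfold gav
  exact Continuous.div (by fun_prop) (by fun_prop) fun p => (sumexp_pos p.2).ne'

/-- The jet of `log ∑ exp`. -/
def baseJet (ι : Type*) [Fintype ι] : Jet ι where
  F _ x := Real.log (∑ i, Real.exp (x i))
  F0 _ _ := 0
  F1 u _ x := gav x u
  F2 u _ x := gav x (fun i => u i ^ 2) - gav x u ^ 2

lemma hasDerivAt_sumexp (x u w : ι → ℝ) :
    HasDerivAt (fun r : ℝ => ∑ i, Real.exp ((x + r • u) i) * w i)
      (∑ i, Real.exp (x i) * (u i * w i)) 0 := by
  refine HasDerivAt.fun_sum fun i _ => ?_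
  have h1 : HasDerivAt (fun r : ℝ => (x + r • u) i) (u i) 0 := by
    have := ((hasDerivAt_id (0 : ℝ)).mul_const (u i)).const_add (x i)
    simpa using this
  refine (h1.exp.mul_const (w i)).congr_deriv ?_
  simp
  ring

lemma baseJet_ok : (baseJet ι).Ok := by
  have single : ∀ i (x : ι → ℝ), gav x (Pi.single i 1) = Real.exp (x i) / ∑ i, Real.exp (x i) := by
    intro i x
    simp [gav, Pi.single_apply]
  refine ⟨?_, ?_, ?_, ?_, ?_, ?_, ?_, ?_, ?_, ?_, ?_, ?_⟩
  · exact Continuous.log (by fun_prop) fun p => (sumexp_pos p.2).ne'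
  · exact continuous_const
  · exact fun u => gav_cont u
  · exact fun u => (gav_cont _).sub ((gav_cont u).pow 2)
  · exact fun θ x => hasDerivAt_const _ _
  · intro u θ x
    have h1 := hasDerivAt_sumexp x u (fun _ => 1)
    simp only [mul_one] at h1
    have := h1.log (by simpa using (sumexp_pos x).ne')
    refine this.congr_deriv ?_
    simp [baseJet, gav]
  · intro u θ x
    have h1 := hasDerivAt_sumexp x u (fun _ => 1)
    simp only [mul_one] at h1
    have := (hasDerivAt_sumexp x u u).div h1 (by simpa using (sumexp_pos x).ne')
    refine this.congr_deriv ?_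
    have := (sumexp_pos x).ne'
    simp only [zero_smul, add_zero, baseJet, gav, sq]
    field_simp
  · exact ⟨0, fun θ x => by simp [baseJet]⟩
  · intro u
    refine ⟨‖u‖ ^ 2 + ‖u‖ ^ 2, fun θ x => (abs_sub _ _).trans (add_le_add ?_ ?_)⟩
    · refine gav_abs_le _ _ _ fun i => ?_
      rw [abs_pow]
      gcongr
      exact norm_le_pi_norm u i
    · rw [abs_pow]
      gcongr
      exact gav_abs_le _ _ _ fun i => norm_le_pi_norm u i
  · intro u θ x
    simp only [baseJet, single]
    simp only [gav, Finset.sum_div]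
    refine Finset.sum_congr rfl fun i _ => ?_
    ring
  · intro i θ x
    simp only [baseJet, single]
    exact div_nonneg (Real.exp_pos _).le (sumexp_pos x).le
  · intro θ x
    simp only [baseJet, single]
    rw [← Finset.sum_div]
    exact div_self (sumexp_pos x).ne'

end base

/-! ## The SK interpolation -/

/-- coupling direction -/
def vJ (N : ℕ) (β : ℝ) (i j : Fin N) : (Fin N → Bool) → ℝ := fun σ =>
  if i < j then β / Real.sqrt N * (spin (σ i) * spin (σ j)) else 0

/-- field direction -/
def vF (N : ℕ) (c : ℝ) (i : Fin N) : (Fin N → Bool) → ℝ := fun σ => c * spin (σ i)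

def Jblock (N : ℕ) (β : ℝ) : List (Bool × ((Fin N → Bool) → ℝ)) :=
  (List.finRange N).flatMap fun i => (List.finRange N).map fun j => (true, vJ N β i j)

def Fblock (N : ℕ) (c : ℝ) : List (Bool × ((Fin N → Bool) → ℝ)) :=
  (List.finRange N).map fun i => (false, vF N c i)

/-- field strength of level `a` -/
def fs (β : ℝ) (q : ℕ → ℝ) (a : ℕ) : ℝ := β * Real.sqrt (q a - q (a - 1))

def prior (N : ℕ) (β : ℝ) (q : ℕ → ℝ) : ℕ → List (Bool × ((Fin N → Bool) → ℝ))
  | 0 => Jblock N β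
  | a + 1 => Fblock N (fs β q (a + 1)) ++ prior N β q a

lemma spin_sq (b : Bool) : spin b * spin b = 1 := by cases b <;> simp [spin]

lemma rho_true (θ : ℝ) : rho true θ = Real.sin θ * Real.cos θ := by simp [rho, sc, sc']
lemma rho_false (θ : ℝ) : rho false θ = -(Real.sin θ * Real.cos θ) := by
  simp [rho, sc, sc', mul_comm]

lemma sum_finRange {N : ℕ} (f : Fin N → ℝ) : ((List.finRange N).map f).sum = ∑ i, f i :=
  (Fin.sum_univ_def f).symm

lemma sum_Jblock (N : ℕ) (β θ : ℝ) (g : ((Fin N → Bool) → ℝ) → ℝ) :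
    ((Jblock N β).map fun l => rho l.1 θ * g l.2).sum
      = Real.sin θ * Real.cos θ * ∑ i, ∑ j, g (vJ N β i j) := by
  unfold Jblock
  rw [List.map_flatMap, List.flatMap_def, List.sum_flatten, List.map_map, Finset.mul_sum,
    ← sum_finRange]
  congr 2
  ext i
  simp only [Function.comp, List.map_map]
  rw [Finset.mul_sum, ← sum_finRange]
  congr 2

lemma sum_Fblock (N : ℕ) (c θ : ℝ) (g : ((Fin N → Bool) → ℝ) → ℝ) :
    ((Fblock N c).map fun l => rho l.1 θ * g l.2).sum
      = -(Real.sin θ * Real.cos θ * ∑ i, g (vF N c i)) := by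
  unfold Fblock
  rw [List.map_map, ← neg_mul, Finset.mul_sum, ← sum_finRange]
  congr 2
  ext i
  simp [rho_false]

lemma sum_prior (N : ℕ) (β θ : ℝ) (q : ℕ → ℝ) (a : ℕ) (g : ((Fin N → Bool) → ℝ) → ℝ) :
    ((prior N β q a).map fun l => rho l.1 θ * g l.2).sum
      = Real.sin θ * Real.cos θ * (∑ i, ∑ j, g (vJ N β i j)
        - ∑ b ∈ Finset.range a, ∑ i, g (vF N (fs β q (b + 1)) i)) := by
  induction a with
  | zero => simp [prior, sum_Jblock]
  | succ a ih =>
    simp only [prior, List.map_append, List.sum_append]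
    rw [ih, sum_Fblock, Finset.sum_range_succ]
    ring

lemma sum_lt_symm {N : ℕ} (X : Fin N → Fin N → ℝ) (hX : ∀ i j, X i j = X j i) :
    2 * ∑ i, ∑ j, (if i < j then X i j else 0) + ∑ i, X i i = ∑ i, ∑ j, X i j := by
  have h1 : ∑ i, ∑ j, (if i < j then X i j else 0) = ∑ i, ∑ j, (if j < i then X i j else 0) := by
    rw [Finset.sum_comm]
    refine Finset.sum_congr rfl fun i _ => Finset.sum_congr rfl fun j _ => ?_
    rw [hX]
  have h2 : ∑ i, X i i = ∑ i, ∑ j, (if i = j then X i j else 0) := by simp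
  rw [two_mul]
  nth_rewrite 2 [h1]
  rw [h2, ← Finset.sum_add_distrib, ← Finset.sum_add_distrib]
  refine Finset.sum_congr rfl fun i _ => ?_
  rw [← Finset.sum_add_distrib, ← Finset.sum_add_distrib]
  refine Finset.sum_congr rfl fun j _ => ?_
  rcases lt_trichotomy i j with h | h | h
  · simp [h, h.not_gt, h.ne]
  · simp [h]
  · simp [h, h.not_gt, h.ne']

/-- Positivity of the overlap variance around `q`. -/
lemma overlap_pos {ι : Type*} [Fintype ι] {N : ℕ} (p : ι → ℝ) (hp : ∀ s, 0 ≤ p s)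
    (hp1 : ∑ s, p s = 1) (A : ι → Fin N → ℝ) (Q : ℝ) :
    0 ≤ ∑ i, ∑ j, (∑ s, p s * (A s i * A s j)) ^ 2 - 2 * Q * ∑ i, (∑ s, p s * A s i) ^ 2 + Q ^ 2 := by
  have h0 : 0 ≤ ∑ s, ∑ t, p s * p t * (∑ i, A s i * A t i - Q) ^ 2 :=
    Finset.sum_nonneg fun s _ => Finset.sum_nonneg fun t _ =>
      mul_nonneg (mul_nonneg (hp s) (hp t)) (sq_nonneg _)
  have e1 : ∑ s, ∑ t, p s * p t * (∑ i, A s i * A t i) ^ 2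
      = ∑ i, ∑ j, (∑ s, p s * (A s i * A s j)) ^ 2 := by
    simp only [sq, Finset.sum_mul_sum]
    simp only [Finset.mul_sum]
    have : ∀ s t : ι, ∀ i j : Fin N, p s * p t * (A s i * A t i * (A s j * A t j))
        = p s * (A s i * A s j) * (p t * (A t i * A t j)) := fun s t i j => by ring
    simp only [this]
    rw [Finset.sum_congr rfl fun s _ => Finset.sum_comm]
    rw [Finset.sum_comm]
    refine Finset.sum_congr rfl fun i _ => ?_
    rw [Finset.sum_congr rfl fun s _ => Finset.sum_comm]
    rw [Finset.sum_comm]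
  have e2 : ∑ s, ∑ t, p s * p t * (∑ i, A s i * A t i) = ∑ i, (∑ s, p s * A s i) ^ 2 := by
    simp only [sq, Finset.sum_mul_sum]
    simp only [Finset.mul_sum]
    have : ∀ s t : ι, ∀ i : Fin N, p s * p t * (A s i * A t i)
        = p s * A s i * (p t * A t i) := fun s t i => by ring
    simp only [this]
    rw [Finset.sum_congr rfl fun s _ => Finset.sum_comm]
    rw [Finset.sum_comm]
  have e3 : ∑ s, ∑ t, p s * p t = 1 := by
    rw [← Finset.sum_mul_sum, hp1, one_mul]
  have : ∑ s, ∑ t, p s * p t * (∑ i, A s i * A t i - Q) ^ 2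
      = ∑ s, ∑ t, p s * p t * (∑ i, A s i * A t i) ^ 2
        - 2 * Q * ∑ s, ∑ t, p s * p t * (∑ i, A s i * A t i) + Q ^ 2 * ∑ s, ∑ t, p s * p t := by
    have hh : ∀ s t, p s * p t * (∑ i, A s i * A t i - Q) ^ 2
        = p s * p t * (∑ i, A s i * A t i) ^ 2 - 2 * Q * (p s * p t * (∑ i, A s i * A t i))
          + Q ^ 2 * (p s * p t) := fun s t => by ring
    simp only [hh]
    simp only [Finset.sum_add_distrib, Finset.sum_sub_distrib]
    simp only [← Finset.mul_sum (a := 2 * Q), ← Finset.mul_sum (a := Q ^ 2)]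
  rw [this, e1, e2, e3] at h0
  linarith

lemma sum_fs_sq {β : ℝ} {q : ℕ → ℝ} {K : ℕ} (hq0 : q 0 = 0) (hq : ∀ a, a < K → q a ≤ q (a + 1))
    {a : ℕ} (ha : a ≤ K) : ∑ b ∈ Finset.range a, fs β q (b + 1) ^ 2 = β ^ 2 * q a := by
  induction a with
  | zero => simp [hq0]
  | succ a ih =>
    rw [Finset.sum_range_succ, ih (by omega), fs, mul_pow, Nat.add_sub_cancel,
      Real.sq_sqrt (by linarith [hq a (by omega)])]
    ring

lemma prior_F1_lower {N : ℕ} (hN : 0 < N) {J : Jet (Fin N → Bool)} (h : J.Ok) {β : ℝ} {q : ℕ → ℝ}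
    {K : ℕ} (hq0 : q 0 = 0) (hq : ∀ a, a < K → q a ≤ q (a + 1)) {a : ℕ} (ha : a ≤ K)
    {θ : ℝ} (hθ : 0 ≤ Real.sin θ * Real.cos θ) (x : (Fin N → Bool) → ℝ) :
    -((prior N β q a).map fun l => rho l.1 θ * J.F1 l.2 θ x ^ 2).sum
      ≤ Real.sin θ * Real.cos θ * (β ^ 2 * (N * q a ^ 2 / 2 + 1 / 2)) := by
  rw [sum_prior N β θ q a (fun v => J.F1 v θ x ^ 2), ← mul_neg]
  refine mul_le_mul_of_nonneg_left ?_ hθ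
  set p : (Fin N → Bool) → ℝ := fun s => J.F1 (Pi.single s 1) θ x with hp
  have hN' : (0 : ℝ) < N := by exact_mod_cast hN
  have f1 : ∀ i j, J.F1 (vJ N β i j) θ x ^ 2 = β ^ 2 / N *
      (if i < j then (∑ s, p s * (spin (s i) * spin (s j))) ^ 2 else 0) := by
    intro i j
    rw [h.lin]
    unfold vJ
    split_ifs with hij
    · have : ∀ s : Fin N → Bool, J.F1 (Pi.single s 1) θ x * (β / Real.sqrt N * (spin (s i) * spin (s j)))
          = β / Real.sqrt N * (p s * (spin (s i) * spin (s j))) := fun s => by rw [hp]; ring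
      simp only [this]
      rw [← Finset.mul_sum, mul_pow, div_pow, Real.sq_sqrt hN'.le]
    · simp
  have f2 : ∀ c i, J.F1 (vF N c i) θ x ^ 2 = c ^ 2 * (∑ s, p s * spin (s i)) ^ 2 := by
    intro c i
    rw [h.lin]
    have : ∀ s : Fin N → Bool, J.F1 (Pi.single s 1) θ x * (vF N c i s)
          = c * (p s * spin (s i)) := fun s => by rw [hp, vF]; ring
    simp only [this]
    rw [← Finset.mul_sum, mul_pow]
  simp only [f1, f2]
  simp only [← Finset.mul_sum]
  rw [← Finset.sum_mul, sum_fs_sq hq0 hq ha]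
  have s1 := sum_lt_symm (fun i j : Fin N => (∑ s, p s * (spin (s i) * spin (s j))) ^ 2)
    (fun i j => by
      congr 1
      exact Finset.sum_congr rfl fun s _ => by ring)
  have s2 : ∑ i : Fin N, (∑ s, p s * (spin (s i) * spin (s i))) ^ 2 = N := by
    simp only [spin_sq, mul_one]
    have : ∑ s, p s = 1 := h.one θ x
    simp [this]
  have s3 := overlap_pos p (fun s => h.pos s θ x) (h.one θ x) (fun s i => spin (s i)) (N * q a)
  simp only [s2] at s1
  rw [← s1] at s3
  set X := ∑ i : Fin N, ∑ j : Fin N, if i < j then (∑ s, p s * (spin (s i) * spin (s j))) ^ 2 else 0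
  set Y := ∑ i : Fin N, (∑ s, p s * spin (s i)) ^ 2
  have : β ^ 2 * (N * q a ^ 2 / 2 + 1 / 2) - -(β ^ 2 / N * X - β ^ 2 * q a * Y)
      = β ^ 2 / (2 * N) * (2 * X + N - 2 * (N * q a) * Y + (N * q a) ^ 2) := by
    field_simp
    ring
  have h5 : 0 ≤ β ^ 2 / (2 * N) * (2 * X + N - 2 * (N * q a) * Y + (N * q a) ^ 2) := by positivity
  linarith

lemma Gen_base (N : ℕ) (P : List (Bool × ((Fin N → Bool) → ℝ))) (m θ : ℝ)
    (x : (Fin N → Bool) → ℝ) :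
    Gen (baseJet (Fin N → Bool)) P m θ x
      = (P.map fun l => rho l.1 θ * gav x (fun i => l.2 i ^ 2)).sum
        - (1 - m) * (P.map fun l => rho l.1 θ * (baseJet (Fin N → Bool)).F1 l.2 θ x ^ 2).sum := by
  induction P with
  | nil => simp [Gen, baseJet]
  | cons l P ih =>
    simp only [Gen, List.map_cons, List.sum_cons] at ih ⊢
    simp only [baseJet] at ih ⊢
    linear_combination ih

lemma gav_const {ι : Type*} [Fintype ι] [DecidableEq ι] [Nonempty ι] (x : ι → ℝ) (c : ℝ) :
    gav x (fun _ => c) = c := by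
  unfold gav
  rw [← Finset.sum_mul, mul_div_assoc, mul_comm, div_mul_cancel₀]
  exact (sumexp_pos x).ne'

lemma Gen_base_le {N : ℕ} (hN : 0 < N) {β : ℝ} {q : ℕ → ℝ}
    {K : ℕ} (hq0 : q 0 = 0) (hqK : q K = 1) (hq : ∀ a, a < K → q a ≤ q (a + 1)) {m : ℝ} (hm : m ≤ 1)
    {θ : ℝ} (hθ : 0 ≤ Real.sin θ * Real.cos θ) (x : (Fin N → Bool) → ℝ) :
    Gen (baseJet (Fin N → Bool)) (prior N β q K) m θ x
      ≤ Real.sin θ * Real.cos θ * (β ^ 2 * (-N / 2 - 1 / 2 + (1 - m) * (N / 2 + 1 / 2))) := by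
  have hN' : (0 : ℝ) < N := by exact_mod_cast hN
  rw [Gen_base, sum_prior N β θ q K (fun v => gav x (fun i => v i ^ 2))]
  have h1 := prior_F1_lower hN (baseJet_ok (ι := Fin N → Bool)) (β := β) hq0 hq le_rfl hθ x
  rw [hqK] at h1
  have f1 : ∀ i j, gav x (fun s => vJ N β i j s ^ 2) = β ^ 2 / N * (if i < j then 1 else 0) := by
    intro i j
    have : (fun s => vJ N β i j s ^ 2) = fun _ => β ^ 2 / N * (if i < j then 1 else 0) := by
      ext s
      unfold vJ
      split_ifs
      · rw [mul_pow, div_pow, Real.sq_sqrt hN'.le, mul_pow, sq (spin _), sq (spin _), spin_sq,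
          spin_sq]
        ring
      · simp
    rw [this, gav_const]
  have f2 : ∀ c i, gav x (fun s => vF N c i s ^ 2) = c ^ 2 := by
    intro c i
    have : (fun s => vF N c i s ^ 2) = fun _ => c ^ 2 := by
      ext s
      rw [vF, mul_pow, sq (spin _), spin_sq, mul_one]
    rw [this, gav_const]
  have s1 := sum_lt_symm (fun i j : Fin N => (1 : ℝ)) (fun i j => rfl)
  simp only [Finset.sum_const, Finset.card_univ, Fintype.card_fin, nsmul_eq_mul, mul_one] at s1
  simp only [f1, f2, Finset.sum_const, Finset.card_univ, Fintype.card_fin, nsmul_eq_mul]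
  simp only [← Finset.mul_sum]
  rw [sum_fs_sq hq0 hq le_rfl, hqK]
  set X := ∑ i : Fin N, ∑ j : Fin N, if i < j then (1 : ℝ) else 0
  have hX : β ^ 2 / N * X = β ^ 2 * (N / 2 - 1 / 2) := by
    have : X = N * (N / 2 - 1 / 2) := by linarith
    rw [this]; field_simp
  rw [hX]
  have h2 := mul_le_mul_of_nonneg_left h1 (by linarith : 0 ≤ 1 - m)
  nlinarith

/-- The jets of the successive levels (from `K` downwards). -/
def UJ (N K : ℕ) (β : ℝ) (q m : ℕ → ℝ) : ℕ → Jet (Fin N → Bool)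
  | 0 => baseJet _
  | j + 1 => steps (m (K - j)) (Fblock N (fs β q (K - j))) (UJ N K β q m j)

lemma UJ_ok (N K : ℕ) (β : ℝ) (q m : ℕ → ℝ) (j : ℕ) : (UJ N K β q m j).Ok := by
  induction j with
  | zero => exact baseJet_ok
  | succ j ih => exact steps_ok ih _ _

lemma UJ_Gen {N : ℕ} (hN : 0 < N) (β : ℝ) (X : OrderParam) {j : ℕ} (hj : j ≤ X.K)
    {θ : ℝ} (hθ : 0 ≤ Real.sin θ * Real.cos θ) (x : (Fin N → Bool) → ℝ) :
    Gen (UJ N X.K β X.q X.m j) (prior N β X.q (X.K - j)) (X.m (X.K - j)) θ x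
      ≤ Real.sin θ * Real.cos θ * (β ^ 2 * (-N / 2 - 1 / 2 + (1 - X.m (X.K - j)) / 2
        + N / 2 * (1 - X.m (X.K - j) * X.q (X.K - j) ^ 2
          - ∑ i ∈ Finset.range j, X.m (X.K - i) * (X.q (X.K - i) ^ 2 - X.q (X.K - i - 1) ^ 2)))) := by
  induction j generalizing x with
  | zero =>
    refine (Gen_base_le hN X.hq0 X.hqK X.hq_mono X.hmK hθ x).trans (le_of_eq ?_)
    simp [X.hqK]
    ring_nf
    tauto
  | succ j ih =>
    obtain ⟨a, ha⟩ : ∃ a, X.K - j = a + 1 := ⟨X.K - j - 1, by omega⟩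
    have ha' : X.K - (j + 1) = a := by omega
    have ih' := ih (by omega)
    have hm : X.m a ≤ X.m (a + 1) := by
      rcases Nat.eq_zero_or_pos a with h0 | h0
      · rw [h0, X.hm0]; exact X.hm1
      · exact X.hm_mono a h0 (by omega)
    rw [Finset.sum_range_succ, ha']
    simp only [ha, Nat.add_sub_cancel] at ih' ⊢
    have e : UJ N X.K β X.q X.m (j + 1)
        = steps (X.m (a + 1)) (Fblock N (fs β X.q (a + 1))) (UJ N X.K β X.q X.m j) := by
      simp only [UJ, ha]
    have h4 := Gen_steps_le (UJ_ok N X.K β X.q X.m j) (X.m (a + 1)) (Fblock N (fs β X.q (a + 1)))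
        (prior N β X.q a) θ _ (fun x => ih' x) x
    rw [← e] at h4
    rw [Gen_change _ _ (X.m (a + 1)) (X.m a)]
    have h2 := prior_F1_lower hN (UJ_ok N X.K β X.q X.m (j + 1)) (β := β) X.hq0 X.hq_mono
      (a := a) (by omega) hθ x
    have h3 := mul_le_mul_of_nonneg_left h2 (by linarith : 0 ≤ X.m (a + 1) - X.m a)
    set S := ∑ i ∈ Finset.range j, X.m (X.K - i) * (X.q (X.K - i) ^ 2 - X.q (X.K - i - 1) ^ 2)
    nlinarith

/-- The full interpolating function. -/
def VJ (N : ℕ) (β : ℝ) (X : OrderParam) : Jet (Fin N → Bool) :=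
  steps 0 (Jblock N β) (UJ N X.K β X.q X.m X.K)

lemma VJ_ok (N : ℕ) (β : ℝ) (X : OrderParam) : (VJ N β X).Ok := steps_ok (UJ_ok _ _ _ _ _ _) _ _

/-- The interpolation sum. -/
def SX (X : OrderParam) : ℝ :=
  ∑ i ∈ Finset.range X.K, X.m (X.K - i) * (X.q (X.K - i) ^ 2 - X.q (X.K - i - 1) ^ 2)

lemma VJ_F0_le {N : ℕ} (hN : 0 < N) (β : ℝ) (X : OrderParam)
    {θ : ℝ} (hθ : 0 ≤ Real.sin θ * Real.cos θ) (x : (Fin N → Bool) → ℝ) :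
    (VJ N β X).F0 θ x ≤ Real.sin θ * Real.cos θ * (-(β ^ 2 * N / 2 * SX X)) := by
  have h1 := fun x => UJ_Gen hN β X le_rfl hθ x
  simp only [Nat.sub_self, X.hm0, prior] at h1
  have h2 := Gen_steps_le (UJ_ok N X.K β X.q X.m X.K) 0 (Jblock N β) [] θ _
    (fun x => by rw [List.append_nil]; exact h1 x) x
  simp only [Gen, List.map_nil, List.sum_nil, add_zero] at h2
  refine h2.trans (le_of_eq ?_)
  unfold SX
  ring

lemma VJ_bound {N : ℕ} (hN : 0 < N) (β : ℝ) (X : OrderParam) (x : (Fin N → Bool) → ℝ) :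
    (VJ N β X).F (Real.pi / 2) x ≤ (VJ N β X).F 0 x - β ^ 2 * N / 4 * SX X := by
  set c := -(β ^ 2 * N / 2 * SX X) with hc
  have hd : ∀ θ, HasDerivAt (fun t => (VJ N β X).F t x - c * (Real.sin t ^ 2 / 2))
      ((VJ N β X).F0 θ x - c * (Real.sin θ * Real.cos θ)) θ := by
    intro θ
    refine ((VJ_ok N β X).d0 θ x).sub (HasDerivAt.const_mul c ?_)
    refine (((Real.hasDerivAt_sin θ).pow 2).div_const 2).congr_deriv ?_
    simp
    ring
  have hanti : AntitoneOn (fun t => (VJ N β X).F t x - c * (Real.sin t ^ 2 / 2))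
      (Set.Icc 0 (Real.pi / 2)) := by
    refine antitoneOn_of_deriv_nonpos (convex_Icc _ _)
      (fun t _ => (hd t).continuousAt.continuousWithinAt)
      (fun t _ => (hd t).differentiableAt.differentiableWithinAt) fun t ht => ?_
    rw [interior_Icc] at ht
    rw [(hd t).deriv]
    have h1 : 0 ≤ Real.sin t * Real.cos t := mul_nonneg
      (Real.sin_nonneg_of_nonneg_of_le_pi ht.1.le (by linarith [ht.2, Real.pi_pos]))
      (Real.cos_nonneg_of_neg_pi_div_two_le_of_le (by linarith [ht.1, Real.pi_pos]) ht.2.le)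
    have := VJ_F0_le hN β X h1 x
    rw [← hc] at this
    linarith
  have := hanti (Set.left_mem_Icc.2 (by positivity)) (Set.right_mem_Icc.2 (by positivity))
    (by positivity : (0 : ℝ) ≤ Real.pi / 2)
  simp only [Real.sin_pi_div_two, Real.sin_zero] at this
  rw [hc] at this
  linarith

end GB

namespace GB

section ends

set_option linter.unusedSectionVars false

variable {ι : Type*} [Fintype ι] [DecidableEq ι] [Nonempty ι]

lemma step_F_of_zero (m : ℝ) (b : Bool) (v : ι → ℝ) (J : Jet ι) {θ : ℝ} (hs : sc b θ = 0) :
    (step m b v J).F θ = J.F θ := by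
  ext x
  by_cases hm : m = 0
  · simp [step, hm, Lop, hs]
  · simp [step, hm, ZZ, Lop, hs]

lemma steps_F_of_zero (m : ℝ) (L : List (Bool × (ι → ℝ))) (J : Jet ι) {θ : ℝ}
    (hs : ∀ l ∈ L, sc l.1 θ = 0) : (steps m L J).F θ = J.F θ := by
  induction L generalizing J with
  | nil => rfl
  | cons l L ih =>
    have := ih (step m l.1 l.2 J) fun l' hl' => hs l' (List.mem_cons_of_mem _ hl')
    rw [step_F_of_zero m l.1 l.2 J (hs l List.mem_cons_self)] at this
    exact this

lemma steps_zero_F (L : List (Bool × (ι → ℝ))) (J : Jet ι) (θ : ℝ) :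
    (steps 0 L J).F θ = L.foldl (fun Φ l => fun x => ∫ z, Φ (x + (z * sc l.1 θ) • l.2) ∂stdGauss)
      (J.F θ) := by
  induction L generalizing J with
  | nil => rfl
  | cons l L ih =>
    have := ih (step 0 l.1 l.2 J)
    refine Eq.trans this ?_
    rw [List.foldl_cons]
    congr 1
    ext x
    simp [step, Lop]

lemma steps_zero_ge {J : Jet ι} (h : J.Ok) (L : List (Bool × (ι → ℝ))) (θ : ℝ) (s : ι)
    (hJ : ∀ x, x s ≤ J.F θ x) (x : ι → ℝ) : x s ≤ (steps 0 L J).F θ x := by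
  induction L generalizing J with
  | nil => exact hJ x
  | cons l L ih =>
    refine ih (step_ok h 0 l.1 l.2) fun x => ?_
    simp only [step, if_true, Lop]
    have hid : Integrable (fun z : ℝ => z) stdGauss := by
      refine integrable_of_growth (B := 1) (b := 1) continuous_id fun z => ?_
      have := Real.add_one_le_exp (1 * |z|)
      linarith
    have h0 : ∫ z : ℝ, z ∂stdGauss = 0 := by
      unfold stdGauss
      exact integral_id_gaussianReal
    have e : x s = ∫ z, (x s + z * (sc l.1 θ * l.2 s)) ∂stdGauss := by
      rw [integral_add (integrable_const _) (hid.mul_const _), integral_mul_const, h0]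
      simp
    conv_lhs => rw [e]
    refine integral_mono ((integrable_const _).add (hid.mul_const _)) (h.eg.integrable l.1 l.2 θ x)
      fun z => ?_
    have := hJ (x + (z * sc l.1 θ) • l.2)
    simp only [Pi.add_apply, Pi.smul_apply, smul_eq_mul] at this
    simp only
    linarith

end ends

/-- Iterated integration as integration over a product measure. -/
lemma iter_integral {Ω : Type*} [MeasurableSpace Ω] (ν : Measure Ω) [IsProbabilityMeasure ν]
    {ι : Type*} [Fintype ι] {n : ℕ} (W : Fin n → Ω → ι → ℝ) (hW : ∀ k, Measurable (W k))
    (hWi : ∀ k, Integrable (fun ω => ‖W k ω‖) ν) (Φ : (ι → ℝ) → ℝ)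
    (hΦ : ∀ x y, |Φ x - Φ y| ≤ ‖x - y‖) (x : ι → ℝ) :
    (List.finRange n).foldl (fun Φ k => fun x => ∫ ω, Φ (x + W k ω) ∂ν) Φ x
      = ∫ w, Φ (x + ∑ k, W k (w k)) ∂(Measure.pi fun _ : Fin n => ν) := by
  induction n generalizing Φ x with
  | zero => simp
  | succ n ih =>
    have hΦc : Continuous Φ := by
      have : LipschitzWith 1 Φ := LipschitzWith.of_dist_le_mul fun x y => by
        simpa [Real.dist_eq, dist_eq_norm] using hΦ x y
      exact this.continuous
    have int0 : ∀ x, Integrable (fun ω => Φ (x + W 0 ω)) ν := by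
      intro x
      refine ((hWi 0).add (integrable_const |Φ x|)).mono'
        (hΦc.measurable.comp (measurable_const.add (hW 0))).aestronglyMeasurable
        (ae_of_all _ fun ω => ?_)
      have h1 := hΦ (x + W 0 ω) x
      rw [add_sub_cancel_left] at h1
      have h2 : |Φ (x + W 0 ω)| ≤ |Φ (x + W 0 ω) - Φ x| + |Φ x| := by
        simpa using abs_add_le (Φ (x + W 0 ω) - Φ x) (Φ x)
      simp only [Real.norm_eq_abs, Pi.add_apply]
      linarith
    rw [List.finRange_succ, List.foldl_cons, List.foldl_map]
    rw [ih (fun k => W k.succ) (fun k => hW _) (fun k => hWi _) (fun x => ∫ ω, Φ (x + W 0 ω) ∂ν) ?_ x]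
    · have mp := measurePreserving_piFinSuccAbove (fun _ : Fin (n + 1) => ν) 0
      rw [← mp.symm.integral_comp' (fun w => Φ (x + ∑ k, W k (w k)))]
      have e : ∀ p : Ω × (Fin n → Ω), x + ∑ k, W k ((MeasurableEquiv.piFinSuccAbove
          (fun _ : Fin (n + 1) => Ω) 0).symm p k) = x + ∑ k : Fin n, W k.succ (p.2 k) + W 0 p.1 := by
        intro p
        rw [Fin.sum_univ_succ]
        simp [MeasurableEquiv.piFinSuccAbove]
        abel
      simp only [e]
      rw [integral_prod_symm]
      refine (((integrable_const |Φ x|).add (integrable_finsetSum Finset.univ (fun k _ =>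
        (((measurePreserving_eval (fun _ : Fin n => ν) k).integrable_comp_of_integrable
          (hWi k.succ)).comp_snd ν)))).add ((hWi 0).comp_fst _)).mono' ?_
          (ae_of_all _ fun p => ?_)
      · have h1 : Measurable fun p : Ω × (Fin n → Ω) =>
            x + ∑ k : Fin n, W k.succ (p.2 k) + W 0 p.1 := by
          refine (measurable_const.add (Finset.measurable_sum _ fun k _ =>
            (hW _).comp ((measurable_pi_apply k).comp measurable_snd))).add
            ((hW 0).comp measurable_fst)
        exact (hΦc.measurable.comp h1).aestronglyMeasurable
      · have h1 := hΦ (x + ∑ k : Fin n, W k.succ (p.2 k) + W 0 p.1) x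
        rw [add_assoc, add_sub_cancel_left] at h1
        have h3 := norm_add_le (∑ k : Fin n, W k.succ (p.2 k)) (W 0 p.1)
        have h4 := norm_sum_le Finset.univ (fun k : Fin n => W k.succ (p.2 k))
        have h2 := abs_add_le (Φ (x + (∑ k : Fin n, W k.succ (p.2 k) + W 0 p.1)) - Φ x) (Φ x)
        rw [sub_add_cancel] at h2
        simp only [Real.norm_eq_abs, Pi.add_apply, Finset.sum_apply, Function.comp, Function.eval,
          add_assoc] at *
        linarith
    · intro a b
      rw [← integral_sub (int0 a) (int0 b)]
      refine (norm_integral_le_of_norm_le_const (μ := ν)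
        (f := fun ω => Φ (a + W 0 ω) - Φ (b + W 0 ω)) (C := ‖a - b‖) (ae_of_all _ fun ω => ?_)).trans ?_
      · have := hΦ (a + W 0 ω) (b + W 0 ω)
        rw [add_sub_add_right_eq_sub] at this
        exact this
      · simp

end GB

namespace GB

/-! ### The endpoint `θ = π/2` -/

lemma sc_false_pi : sc false (Real.pi / 2) = 0 := by simp [sc]
lemma sc_true_pi : sc true (Real.pi / 2) = 1 := by simp [sc]
lemma sc_false_zero : sc false 0 = 1 := by simp [sc]
lemma sc_true_zero : sc true 0 = 0 := by simp [sc]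

lemma UJ_pi (N K : ℕ) (β : ℝ) (q m : ℕ → ℝ) (j : ℕ) :
    (UJ N K β q m j).F (Real.pi / 2) = (baseJet (Fin N → Bool)).F (Real.pi / 2) := by
  induction j with
  | zero => rfl
  | succ j ih =>
    simp only [UJ]
    rw [steps_F_of_zero, ih]
    intro l hl
    simp only [Fblock, List.mem_map] at hl
    obtain ⟨i, _, rfl⟩ := hl
    exact sc_false_pi

lemma VJ_pi (N : ℕ) (β : ℝ) (X : OrderParam) :
    (VJ N β X).F (Real.pi / 2) = (steps 0 (Jblock N β) (baseJet (Fin N → Bool))).F (Real.pi / 2) := by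
  unfold VJ
  rw [steps_zero_F, steps_zero_F, UJ_pi]

/-- The deterministic field. -/
def emb (N : ℕ) (β : ℝ) (Y : Fin N → ℝ) : (Fin N → Bool) → ℝ := fun σ =>
  ∑ i, β * Y i * spin (σ i)

lemma integrable_id_std : Integrable (fun z : ℝ => z) stdGauss := by
  refine integrable_of_growth (B := 1) (b := 1) continuous_id fun z => ?_
  have := Real.add_one_le_exp (1 * |z|)
  linarith

lemma foldl_congr_fun {α γ : Type*} (f g : γ → α → γ) (P : γ → Prop) (L : List α)
    (hP : ∀ c a, P c → P (g c a)) (h : ∀ c a, P c → f c a = g c a) (c : γ) (hc : P c) :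
    L.foldl f c = L.foldl g c := by
  induction L generalizing c with
  | nil => rfl
  | cons a L ih => rw [List.foldl_cons, List.foldl_cons, h c a hc, ih _ (hP c a hc)]

lemma lip_shift {Ω : Type*} [MeasurableSpace Ω] (ν : Measure Ω) [IsProbabilityMeasure ν]
    {ι : Type*} [Fintype ι] (W : Ω → ι → ℝ) (hW : Measurable W)
    (hWi : Integrable (fun ω => ‖W ω‖) ν) (Φ : (ι → ℝ) → ℝ)
    (hΦ : ∀ x y, |Φ x - Φ y| ≤ ‖x - y‖) (a b : ι → ℝ) :
    |(∫ ω, Φ (a + W ω) ∂ν) - ∫ ω, Φ (b + W ω) ∂ν| ≤ ‖a - b‖ := by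
  have hΦc : Continuous Φ := by
    have : LipschitzWith 1 Φ := LipschitzWith.of_dist_le_mul fun x y => by
      simpa [Real.dist_eq, dist_eq_norm] using hΦ x y
    exact this.continuous
  have int0 : ∀ x, Integrable (fun ω => Φ (x + W ω)) ν := by
    intro x
    refine (hWi.add (integrable_const |Φ x|)).mono'
      (hΦc.measurable.comp (measurable_const.add hW)).aestronglyMeasurable
      (ae_of_all _ fun ω => ?_)
    have h1 := hΦ (x + W ω) x
    rw [add_sub_cancel_left] at h1
    have h2 : |Φ (x + W ω)| ≤ |Φ (x + W ω) - Φ x| + |Φ x| := by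
      simpa using abs_add_le (Φ (x + W ω) - Φ x) (Φ x)
    simp only [Real.norm_eq_abs, Pi.add_apply]
    linarith
  rw [← integral_sub (int0 a) (int0 b)]
  refine (norm_integral_le_of_norm_le_const (μ := ν)
        (f := fun ω => Φ (a + W ω) - Φ (b + W ω)) (C := ‖a - b‖) (ae_of_all _ fun ω => ?_)).trans ?_
  · have := hΦ (a + W ω) (b + W ω)
    rw [add_sub_add_right_eq_sub] at this
    exact this
  · simp

lemma row_meas {ι : Type*} [Fintype ι] (n : ℕ) (v : Fin n → ι → ℝ) :
    Measurable (fun g : Fin n → ℝ => ∑ j, g j • v j) := by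
  have : Continuous (fun g : Fin n → ℝ => ∑ j, g j • v j) := by fun_prop
  exact this.measurable

lemma row_int {ι : Type*} [Fintype ι] (n : ℕ) (v : Fin n → ι → ℝ) :
    Integrable (fun g : Fin n → ℝ => ‖∑ j, g j • v j‖) (gaussN n) := by
  refine (integrable_finsetSum Finset.univ fun j _ => ((measurePreserving_eval
    (fun _ : Fin n => stdGauss) j).integrable_comp_of_integrable
      (integrable_id_std.norm.mul_const ‖v j‖))).mono' (row_meas n v).norm.aestronglyMeasurable
      (ae_of_all _ fun g => ?_)
  rw [norm_norm]
  refine (norm_sum_le _ _).trans (le_of_eq ?_)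
  simp [norm_smul]

lemma row_fold {ι : Type*} [Fintype ι] (n : ℕ) (v : Fin n → ι → ℝ) (Φ : (ι → ℝ) → ℝ)
    (hΦ : ∀ x y, |Φ x - Φ y| ≤ ‖x - y‖) :
    (List.finRange n).foldl (fun Φ j => fun x => ∫ z : ℝ, Φ (x + z • v j) ∂stdGauss) Φ
      = fun x => ∫ g, Φ (x + ∑ j, g j • v j) ∂gaussN n := by
  ext x
  exact iter_integral stdGauss (fun j z => z • v j)
    (fun j => (by fun_prop : Continuous fun z : ℝ => z • v j).measurable)
    (fun j => by simpa [norm_smul] using integrable_id_std.norm.mul_const ‖v j‖) Φ hΦ x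

lemma mat_fold {ι : Type*} [Fintype ι] (n : ℕ) (v : Fin n → Fin n → ι → ℝ) (Φ : (ι → ℝ) → ℝ)
    (hΦ : ∀ x y, |Φ x - Φ y| ≤ ‖x - y‖) (x : ι → ℝ) :
    (List.finRange n).foldl (fun Φ i => (List.finRange n).foldl
        (fun Φ j => fun x => ∫ z : ℝ, Φ (x + z • v i j) ∂stdGauss) Φ) Φ x
      = ∫ Jc, Φ (x + ∑ i, ∑ j, Jc i j • v i j) ∂gaussC n := by
  rw [foldl_congr_fun _ (fun Φ i => fun x => ∫ g, Φ (x + ∑ j, g j • v i j) ∂gaussN n)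
    (fun Φ => ∀ x y, |Φ x - Φ y| ≤ ‖x - y‖) _ ?_ ?_ _ hΦ]
  · exact iter_integral (gaussN n) (fun i g => ∑ j, g j • v i j) (fun i => row_meas n _)
      (fun i => row_int n _) Φ hΦ x
  · intro Φ i h a b
    exact lip_shift (gaussN n) _ (row_meas n _) (row_int n _) Φ h a b
  · intro Φ i h
    exact row_fold n (v i) Φ h

lemma logZ_eq (N : ℕ) (β h : ℝ) (Jc : Fin N → Fin N → ℝ) :
    Real.log (ZSK N β h Jc) = (baseJet (Fin N → Bool)).F (Real.pi / 2)
      (emb N β (fun _ => h) + ∑ i, ∑ j, Jc i j • vJ N β i j) := by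
  unfold ZSK baseJet
  simp only
  congr 1
  refine Finset.sum_congr rfl fun σ _ => ?_
  congr 1
  simp only [hamSK, emb, Pi.add_apply, Finset.sum_apply, Pi.smul_apply, smul_eq_mul, vJ]
  have e1 : ∑ i, ∑ j, Jc i j * (if i < j then β / Real.sqrt N * (spin (σ i) * spin (σ j)) else 0)
      = β / Real.sqrt N * ∑ i, ∑ j, (if i < j then Jc i j * spin (σ i) * spin (σ j) else 0) := by
    rw [Finset.mul_sum]
    refine Finset.sum_congr rfl fun i _ => ?_
    rw [Finset.mul_sum]
    refine Finset.sum_congr rfl fun j _ => ?_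
    split_ifs <;> ring
  rw [e1, ← Finset.mul_sum]
  ring

lemma integral_logZ (N : ℕ) (β h : ℝ) :
    ∫ Jc, Real.log (ZSK N β h Jc) ∂gaussC N
      = (steps 0 (Jblock N β) (baseJet (Fin N → Bool))).F (Real.pi / 2) (emb N β fun _ => h) := by
  rw [steps_zero_F]
  unfold Jblock
  rw [List.foldl_flatMap]
  simp only [List.foldl_map, sc_true_pi, mul_one]
  rw [mat_fold N (vJ N β) _ (fun x y => (baseJet_ok).lipx _ x y)]
  simp only [logZ_eq]

/-! ### The endpoint `θ = 0` -/

lemma emb_update (N : ℕ) (β s z : ℝ) (Y : Fin N → ℝ) (i : Fin N) :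
    emb N β Y + (z * sc false 0) • vF N (β * Real.sqrt s) i
      = emb N β (Function.update Y i (Y i + z * Real.sqrt s)) := by
  ext σ
  simp only [emb, vF, sc_false_zero, mul_one, Pi.add_apply, Pi.smul_apply, smul_eq_mul]
  rw [← Finset.add_sum_erase _ _ (Finset.mem_univ i),
    ← Finset.add_sum_erase _ (fun j => β * Function.update Y i (Y i + z * Real.sqrt s) j * spin (σ j))
      (Finset.mem_univ i)]
  have : ∑ j ∈ Finset.univ.erase i, β * Function.update Y i (Y i + z * Real.sqrt s) j * spin (σ j)
      = ∑ j ∈ Finset.univ.erase i, β * Y j * spin (σ j) := by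
    refine Finset.sum_congr rfl fun j hj => ?_
    rw [Function.update_of_ne (Finset.ne_of_mem_erase hj)]
  rw [this, Function.update_self]
  ring

lemma step_site {N : ℕ} {β : ℝ} {J : Jet (Fin N → Bool)} (h : J.Ok) {C : ℝ}
    {f : Fin N → ℝ → ℝ} (hf : ∀ Y, J.F 0 (emb N β Y) = C + ∑ i, f i (Y i)) (m s : ℝ) (i : Fin N)
    (Y : Fin N → ℝ) :
    (step m false (vF N (β * Real.sqrt s) i) J).F 0 (emb N β Y)
      = C + ∑ k, Function.update f i (pStep m s (f i)) k (Y k) := by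
  set D := C + ∑ k ∈ Finset.univ.erase i, f k (Y k) with hD
  have e0 : C + ∑ k, Function.update f i (pStep m s (f i)) k (Y k) = D + pStep m s (f i) (Y i) := by
    rw [← Finset.add_sum_erase _ _ (Finset.mem_univ i), Function.update_self, hD]
    have : ∑ k ∈ Finset.univ.erase i, Function.update f i (pStep m s (f i)) k (Y k)
        = ∑ k ∈ Finset.univ.erase i, f k (Y k) := by
      refine Finset.sum_congr rfl fun j hj => ?_
      rw [Function.update_of_ne (Finset.ne_of_mem_erase hj)]
    rw [this]
    ring
  have e1 : ∀ z, J.F 0 (emb N β Y + (z * sc false 0) • vF N (β * Real.sqrt s) i)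
      = D + f i (Y i + z * Real.sqrt s) := by
    intro z
    rw [emb_update, hf, ← Finset.add_sum_erase _ _ (Finset.mem_univ i), Function.update_self, hD]
    have : ∑ k ∈ Finset.univ.erase i, f k (Function.update Y i (Y i + z * Real.sqrt s) k)
        = ∑ k ∈ Finset.univ.erase i, f k (Y k) := by
      refine Finset.sum_congr rfl fun j hj => ?_
      rw [Function.update_of_ne (Finset.ne_of_mem_erase hj)]
    rw [this]
    ring
  rw [e0]
  by_cases hm : m = 0
  · simp only [step, pStep, hm, if_true, Lop]
    have hi := h.eg.integrable false (vF N (β * Real.sqrt s) i) 0 (emb N β Y)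
    simp only [e1] at hi ⊢
    have hi' : Integrable (fun z => f i (Y i + z * Real.sqrt s)) stdGauss := by
      have := hi.sub (integrable_const D)
      refine this.congr (ae_of_all _ fun z => ?_)
      simp
    rw [integral_add (integrable_const _) hi']
    simp
  · have hp := ZZ_pos h m false (vF N (β * Real.sqrt s) i) 0 (emb N β Y)
    simp only [step, pStep, hm, if_false]
    have e2 : ZZ m false (vF N (β * Real.sqrt s) i) J 0 (emb N β Y) = Real.exp (m * D) *
        ∫ z, Real.exp (m * f i (Y i + z * Real.sqrt s)) ∂stdGauss := by
      simp only [ZZ, Lop, e1, mul_add, Real.exp_add]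
      rw [integral_const_mul]
    rw [e2] at hp ⊢
    rw [Real.log_mul (Real.exp_pos _).ne' (pos_of_mul_pos_right hp (Real.exp_pos _).le).ne', Real.log_exp,
      mul_add, inv_mul_cancel_left₀ hm]

lemma steps_site {N : ℕ} {β : ℝ} (m s : ℝ) (L : List (Fin N)) {J : Jet (Fin N → Bool)} (h : J.Ok)
    {C : ℝ} {f : Fin N → ℝ → ℝ} (hf : ∀ Y, J.F 0 (emb N β Y) = C + ∑ i, f i (Y i))
    (Y : Fin N → ℝ) :
    (steps m (L.map fun i => (false, vF N (β * Real.sqrt s) i)) J).F 0 (emb N β Y)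
      = C + ∑ k, (L.foldl (fun f i => Function.update f i (pStep m s (f i))) f) k (Y k) := by
  induction L generalizing J f with
  | nil => exact hf Y
  | cons i L ih => exact ih (step_ok h _ _ _) (fun Y => step_site h hf m s i Y)

lemma foldl_update {α γ : Type*} [DecidableEq α] (op : γ → γ) (L : List α) (hL : L.Nodup)
    (f : α → γ) (k : α) :
    (L.foldl (fun f i => Function.update f i (op (f i))) f) k = if k ∈ L then op (f k) else f k := by
  induction L generalizing f with
  | nil => simp
  | cons i L ih =>
    rw [List.foldl_cons, ih hL.of_cons]
    have := (List.nodup_cons.1 hL).1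
    by_cases hk : k = i
    · subst hk
      simp [this]
    · simp [hk]

lemma base_emb (N : ℕ) (β : ℝ) (Y : Fin N → ℝ) :
    (baseJet (Fin N → Bool)).F 0 (emb N β Y)
      = N * Real.log 2 + ∑ i, Real.log (Real.cosh (β * Y i)) := by
  have e : ∑ σ : Fin N → Bool, Real.exp (emb N β Y σ) = ∏ i : Fin N, (2 * Real.cosh (β * Y i)) := by
    have := Finset.prod_univ_sum (fun _ : Fin N => (Finset.univ : Finset Bool))
      (fun i b => Real.exp (β * Y i * spin b))
    rw [Fintype.piFinset_univ] at this
    simp only [emb, Real.exp_sum]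
    rw [← this]
    refine Finset.prod_congr rfl fun i _ => ?_
    rw [Fintype.sum_bool, Real.cosh_eq]
    simp [spin]
    ring
  simp only [baseJet]
  rw [e, Real.log_prod (fun i _ => (mul_pos two_pos (Real.cosh_pos _)).ne')]
  have : ∀ i, Real.log (2 * Real.cosh (β * Y i)) = Real.log 2 + Real.log (Real.cosh (β * Y i)) :=
    fun i => Real.log_mul two_ne_zero (Real.cosh_pos _).ne'
  simp only [this, Finset.sum_add_distrib]
  simp

lemma UJ_zero (N K : ℕ) (β : ℝ) (q m : ℕ → ℝ) (j : ℕ) (Y : Fin N → ℝ) :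
    (UJ N K β q m j).F 0 (emb N β Y)
      = N * Real.log 2 + ∑ i, parisiLevel K q m β j (Y i) := by
  induction j generalizing Y with
  | zero => exact base_emb N β Y
  | succ j ih =>
    simp only [UJ, Fblock, fs]
    rw [steps_site (f := fun _ => parisiLevel K q m β j) _ _ _ (UJ_ok N K β q m j) (fun Y => ih Y)]
    simp only [foldl_update _ _ (List.nodup_finRange N), List.mem_finRange, if_true, parisiLevel]

lemma VJ_zero (N : ℕ) (β h : ℝ) (X : OrderParam) :
    (VJ N β X).F 0 (emb N β fun _ => h)
      = N * Real.log 2 + N * parisiLevel X.K X.q X.m β X.K h := by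
  unfold VJ
  rw [steps_F_of_zero, UJ_zero]
  · simp
  · intro l hl
    simp only [Jblock, List.mem_flatMap, List.mem_map] at hl
    obtain ⟨i, _, j, _, rfl⟩ := hl
    exact sc_true_zero

/-! ### The correction term -/

lemma xFun_eq (X : OrderParam) {a : ℕ} (ha : a < X.K) {r : ℝ} (h1 : X.q a < r) (h2 : r < X.q (a + 1)) :
    xFun X.K X.q X.m r = X.m (a + 1) := by
  have mono : ∀ b c, b ≤ c → c ≤ X.K → X.q b ≤ X.q c := by
    intro b c hbc
    induction c, hbc using Nat.le_induction with
    | base => exact fun _ => le_rfl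
    | succ c _ ih => exact fun hc => (ih (by omega)).trans (X.hq_mono c (by omega))
  have hr : ¬ 1 ≤ r := by
    have := mono (a + 1) X.K ha le_rfl
    rw [X.hqK] at this
    linarith
  unfold xFun
  rw [if_neg hr]
  congr 1
  refine le_antisymm (Nat.sInf_le h2) (le_csInf ⟨a + 1, h2⟩ fun b hb => ?_)
  by_contra hlt
  have := mono b a (by omega) ha.le
  have hb' : r < X.q b := hb
  linarith

lemma integral_xFun (X : OrderParam) :
    ∫ r in (0 : ℝ)..1, r * xFun X.K X.q X.m r = SX X / 2 := by
  have eqo : ∀ a, a < X.K → Set.EqOn (fun r => r * X.m (a + 1)) (fun r => r * xFun X.K X.q X.m r)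
      (Set.uIoo (X.q a) (X.q (a + 1))) := by
    intro a ha r hr
    rw [Set.uIoo_of_le (X.hq_mono a ha)] at hr
    simp only [xFun_eq X ha hr.1 hr.2]
  have key := intervalIntegral.sum_integral_adjacent_intervals (μ := volume)
    (f := fun r => r * xFun X.K X.q X.m r) (a := X.q) (n := X.K) (fun a ha =>
      IntervalIntegrable.congr_uIoo
        ((by fun_prop : Continuous fun r => r * X.m (a + 1)).intervalIntegrable _ _) (eqo a ha))
  rw [X.hq0, X.hqK] at key
  rw [← key, SX, Finset.sum_div, ← Finset.sum_range_reflect]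
  refine Finset.sum_congr rfl fun a ha => ?_
  have ha' := Finset.mem_range.1 ha
  have hh : X.K - 1 - a < X.K := by omega
  rw [← intervalIntegral.integral_congr_uIoo (eqo _ hh), intervalIntegral.integral_mul_const,
    integral_id]
  have e1 : X.K - a = X.K - 1 - a + 1 := by omega
  rw [e1, Nat.add_sub_cancel]
  ring

/-! ### Conclusion -/

lemma quenched_le {N : ℕ} (hN : 0 < N) (β h : ℝ) (X : OrderParam) :
    quenchedFE N β h ≤ trialAlpha X.K X.q X.m β h := by
  have hN' : (0 : ℝ) < N := by exact_mod_cast hN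
  have := VJ_bound hN β X (emb N β fun _ => h)
  rw [VJ_pi, VJ_zero] at this
  unfold quenchedFE trialAlpha
  rw [integral_logZ, integral_xFun, inv_mul_le_iff₀ hN']
  linarith

lemma quenched_ge {N : ℕ} (hN : 0 < N) (β h : ℝ) : β * h ≤ quenchedFE N β h := by
  have hN' : (0 : ℝ) < N := by exact_mod_cast hN
  unfold quenchedFE
  rw [integral_logZ, le_inv_mul_iff₀ hN']
  have := steps_zero_ge (baseJet_ok (ι := Fin N → Bool)) (Jblock N β) (Real.pi / 2)
    (fun _ => true) (fun x => by
      simp only [baseJet]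
      rw [Real.le_log_iff_exp_le (sumexp_pos x)]
      exact Finset.single_le_sum (f := fun s => Real.exp (x s)) (fun s _ => (Real.exp_pos _).le)
        (Finset.mem_univ _)) (emb N β fun _ => h)
  refine le_trans (le_of_eq ?_) this
  simp [emb, spin]

instance : Nonempty OrderParam :=
  ⟨{ K := 1, hK := le_rfl, q := fun a => a, m := fun a => if a = 0 then 0 else 1
     hq0 := by simp
     hqK := by simp
     hq_mono := fun a _ => by simp
     hm0 := by simp
     hmtop := by simp
     hm1 := by simp
     hm_mono := fun a h1 h2 => by omega
     hmK := by simp }⟩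

end GB

/-- for every `β ≥ 0` and `h ∈ ℝ`,
`limsup_{N→∞} N⁻¹ E log Z_N(β, h, J) ≤ ᾱ(β, h) = inf_x ᾱ(β, h; x)`,
the infimum running over all piecewise constant functional order parameters. -/
theorem guerra_bound_limsup (β h : ℝ) (hβ : 0 ≤ β) :
    Filter.limsup (fun N : ℕ => quenchedFE N β h) Filter.atTop
      ≤ ⨅ X : OrderParam, trialAlpha X.K X.q X.m β h := by
  refine le_ciInf fun X => ?_
  refine Filter.limsup_le_of_le ?_ ?_
  · refine Filter.IsCoboundedUnder.of_frequently_ge (a := β * h) (Filter.Eventually.frequently ?_)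
    filter_upwards [Filter.eventually_gt_atTop 0] with N hN
    exact GB.quenched_ge hN β h
  · filter_upwards [Filter.eventually_gt_atTop 0] with N hN
    exact GB.quenched_le hN β h X

end
end

section
/- Let x̄ be a piecewise constant order parameter with levels 0 = q_0 ≤ q_1 ≤ … ≤ q_K = 1 and values 0 ≤ m̄_1 ≤ … ≤ m̄_K (not required to be ≤ 1). For β ≥ m̄_K, let x = x̄/β (so 0 ≤ x(q) ≤ 1). Then lim_{β→∞} β⁻¹ ᾱ(β,h; x̄/β) = f̄(0,h;x̄) − (1/2) ∫₀¹ q x̄(q) dq, where f̄ is defined by the same backward Gaussian recursion as the Parisi function but with final condition f̄(1,y) = |y|. -/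
open MeasureTheory ProbabilityTheory Filter

noncomputable section

/-! ## Helper lemmas -/

/-- Affine exponential bounds are integrable against the standard Gaussian. -/
lemma aux_integrable_exp (c d : ℝ) :
    Integrable (fun z : ℝ => Real.exp (c + d * |z|)) stdGauss := by
  have h1 : Integrable (fun z : ℝ => Real.exp (d * |z|)) stdGauss := by
    unfold stdGauss
    exact integrable_exp_mul_abs (integrable_exp_mul_gaussianReal d)
      (integrable_exp_mul_gaussianReal (-d))
  simpa only [Real.exp_add] using h1.const_mul (Real.exp c)

lemma aux_lip_bound {g : ℝ → ℝ} (hg : LipschitzWith 1 g) (s y z : ℝ) :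
    |g (y + z * Real.sqrt s)| ≤ |g y| + Real.sqrt s * |z| := by
  have h := hg.dist_le_mul (y + z * Real.sqrt s) y
  simp only [Real.dist_eq, NNReal.coe_one, one_mul, add_sub_cancel_left, abs_mul,
    abs_of_nonneg (Real.sqrt_nonneg s)] at h
  have h2 := abs_sub_abs_le_abs_sub (g (y + z * Real.sqrt s)) (g y)
  nlinarith

lemma aux_cont {g : ℝ → ℝ} (hg : LipschitzWith 1 g) (s y : ℝ) :
    Continuous (fun z : ℝ => g (y + z * Real.sqrt s)) :=
  hg.continuous.comp (by fun_prop)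

lemma aux_int_exp {g : ℝ → ℝ} (hg : LipschitzWith 1 g) {m : ℝ} (hm : 0 ≤ m) (s y : ℝ) :
    Integrable (fun z : ℝ => Real.exp (m * g (y + z * Real.sqrt s))) stdGauss := by
  refine (aux_integrable_exp (m * |g y|) (m * Real.sqrt s)).mono'
    (Real.continuous_exp.comp ((aux_cont hg s y).const_mul m)).aestronglyMeasurable ?_
  refine Filter.Eventually.of_forall fun z => ?_
  rw [Real.norm_eq_abs, Real.abs_exp, Real.exp_le_exp]
  have h1 := aux_lip_bound hg s y z
  have h2 := le_abs_self (g (y + z * Real.sqrt s))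
  have h3 := mul_le_mul_of_nonneg_left (h2.trans h1) hm
  linarith

lemma aux_int {g : ℝ → ℝ} (hg : LipschitzWith 1 g) (s y : ℝ) :
    Integrable (fun z : ℝ => g (y + z * Real.sqrt s)) stdGauss := by
  refine (aux_integrable_exp (|g y|) (Real.sqrt s)).mono'
    (aux_cont hg s y).aestronglyMeasurable ?_
  refine Filter.Eventually.of_forall fun z => ?_
  rw [Real.norm_eq_abs]
  have h1 := aux_lip_bound hg s y z
  have h2 := Real.add_one_le_exp (|g y| + Real.sqrt s * |z|)
  linarith

/-- Monotonicity of a backward step, with an additive constant. -/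
lemma aux_pStep_mono {g g' : ℝ → ℝ} (hg : LipschitzWith 1 g) (hg' : LipschitzWith 1 g')
    {m : ℝ} (hm : 0 ≤ m) (s y y' c : ℝ) (H : ∀ w, g (y + w) ≤ g' (y' + w) + c) :
    pStep m s g y ≤ pStep m s g' y' + c := by
  unfold pStep
  split_ifs with h0
  · have h1 : ∫ z, g (y + z * Real.sqrt s) ∂stdGauss
        ≤ ∫ z, (g' (y' + z * Real.sqrt s) + c) ∂stdGauss :=
      integral_mono (aux_int hg s y) ((aux_int hg' s y').add (integrable_const c))
        (fun z => H _)
    rw [integral_add (aux_int hg' s y') (integrable_const c)] at h1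
    simpa using h1
  · have hm' : 0 < m := lt_of_le_of_ne hm (Ne.symm h0)
    have hi := aux_int_exp hg hm s y
    have hi' := aux_int_exp hg' hm s y'
    have hp : 0 < ∫ z, Real.exp (m * g (y + z * Real.sqrt s)) ∂stdGauss :=
      integral_exp_pos hi
    have hp' : 0 < ∫ z, Real.exp (m * g' (y' + z * Real.sqrt s)) ∂stdGauss :=
      integral_exp_pos hi'
    have h1 : ∫ z, Real.exp (m * g (y + z * Real.sqrt s)) ∂stdGauss
        ≤ ∫ z, Real.exp (m * c) * Real.exp (m * g' (y' + z * Real.sqrt s)) ∂stdGauss := by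
      refine integral_mono hi (hi'.const_mul _) (fun z => ?_)
      simp only
      rw [← Real.exp_add, Real.exp_le_exp]
      have := mul_le_mul_of_nonneg_left (H (z * Real.sqrt s)) hm
      linarith
    rw [integral_const_mul] at h1
    have h2 := Real.log_le_log hp h1
    rw [Real.log_mul (Real.exp_pos _).ne' hp'.ne', Real.log_exp] at h2
    have h3 := mul_le_mul_of_nonneg_left h2 (inv_nonneg.mpr hm)
    rw [mul_add, inv_mul_cancel_left₀ h0] at h3
    linarith

lemma aux_pStep_lip {g : ℝ → ℝ} (hg : LipschitzWith 1 g) {m : ℝ} (hm : 0 ≤ m) (s : ℝ) :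
    LipschitzWith 1 (pStep m s g) := by
  refine LipschitzWith.of_le_add fun y y' => ?_
  refine aux_pStep_mono hg hg hm s y y' (dist y y') fun w => ?_
  have h := hg.dist_le_mul (y + w) (y' + w)
  rw [dist_add_right, Real.dist_eq] at h
  have h2 := le_abs_self (g (y + w) - g (y' + w))
  simp only [NNReal.coe_one, one_mul] at h
  linarith

/-- Scaling of a backward step. -/
lemma aux_pStep_scale {β : ℝ} (hβ : 0 < β) (m s : ℝ) (g : ℝ → ℝ) (y : ℝ) :
    β⁻¹ * pStep (m / β) s g y = pStep m s (fun w => β⁻¹ * g w) y := by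
  unfold pStep
  by_cases h0 : m = 0
  · simp [h0, integral_const_mul]
  · have h1 : m / β ≠ 0 := div_ne_zero h0 hβ.ne'
    rw [if_neg h0, if_neg h1]
    have h2 : ∀ t, m / β * t = m * (β⁻¹ * t) := fun t => by ring
    simp only [h2]
    rw [← mul_assoc]
    congr 1
    field_simp

/-- The rescaled finite temperature recursion. -/
def auxLevel (K : ℕ) (q m : ℕ → ℝ) (β : ℝ) : ℕ → ℝ → ℝ
  | 0 => fun y => β⁻¹ * Real.log (Real.cosh (β * y))
  | j + 1 => pStep (m (K - j)) (q (K - j) - q (K - j - 1)) (auxLevel K q m β j)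

lemma auxLevel_eq (K : ℕ) (q m : ℕ → ℝ) {β : ℝ} (hβ : 0 < β) (j : ℕ) :
    (fun y => β⁻¹ * parisiLevel K q (fun a => m a / β) β j y) = auxLevel K q m β j := by
  induction j with
  | zero => rfl
  | succ j ih =>
    funext y
    simp only [parisiLevel, auxLevel]
    rw [aux_pStep_scale hβ, ih]

lemma aux_cosh_shift (a b : ℝ) : Real.cosh a ≤ Real.exp |a - b| * Real.cosh b := by
  rw [Real.cosh_eq, Real.cosh_eq]
  have h1 : Real.exp a ≤ Real.exp |a - b| * Real.exp b := by
    rw [← Real.exp_add, Real.exp_le_exp]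
    linarith [le_abs_self (a - b)]
  have h2 : Real.exp (-a) ≤ Real.exp |a - b| * Real.exp (-b) := by
    rw [← Real.exp_add, Real.exp_le_exp]
    linarith [neg_le_abs (a - b)]
  linarith

lemma aux_lip_zero {β : ℝ} (hβ : 0 < β) :
    LipschitzWith 1 (fun y : ℝ => β⁻¹ * Real.log (Real.cosh (β * y))) := by
  refine LipschitzWith.of_le_add fun y y' => ?_
  have h := Real.log_le_log (Real.cosh_pos _) (aux_cosh_shift (β * y) (β * y'))
  rw [Real.log_mul (Real.exp_pos _).ne' (Real.cosh_pos _).ne', Real.log_exp, ← mul_sub,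
    abs_mul, abs_of_pos hβ] at h
  have h3 := mul_le_mul_of_nonneg_left h (inv_nonneg.mpr hβ.le)
  rw [mul_add, inv_mul_cancel_left₀ hβ.ne'] at h3
  rw [Real.dist_eq]
  linarith

lemma aux_zero_le {β : ℝ} (hβ : 0 < β) (y : ℝ) :
    β⁻¹ * Real.log (Real.cosh (β * y)) ≤ |y| := by
  have h := Real.log_le_log (Real.cosh_pos _) (aux_cosh_shift (β * y) 0)
  simp only [Real.cosh_zero, mul_one, sub_zero, Real.log_exp, abs_mul, abs_of_pos hβ] at h
  have h3 := mul_le_mul_of_nonneg_left h (inv_nonneg.mpr hβ.le)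
  rwa [inv_mul_cancel_left₀ hβ.ne'] at h3

lemma aux_zero_ge {β : ℝ} (hβ : 0 < β) (y : ℝ) :
    |y| ≤ β⁻¹ * Real.log (Real.cosh (β * y)) + β⁻¹ * Real.log 2 := by
  have h1 : Real.exp (β * |y|) ≤ Real.cosh (β * y) * 2 := by
    have e : β * |y| = |β * y| := by rw [abs_mul, abs_of_pos hβ]
    rw [e, ← Real.cosh_abs (β * y), Real.cosh_eq]
    linarith [Real.exp_pos (-|β * y|)]
  have h := Real.log_le_log (Real.exp_pos _) h1
  rw [Real.log_exp, Real.log_mul (Real.cosh_pos _).ne' two_ne_zero] at h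
  have h3 := mul_le_mul_of_nonneg_left h (inv_nonneg.mpr hβ.le)
  rw [inv_mul_cancel_left₀ hβ.ne'] at h3
  linarith

lemma aux_levels (K : ℕ) (q m : ℕ → ℝ) (hm : ∀ a, 1 ≤ a → a ≤ K → 0 ≤ m a)
    {β : ℝ} (hβ : 0 < β) (j : ℕ) (hj : j ≤ K) :
    LipschitzWith 1 (auxLevel K q m β j) ∧ LipschitzWith 1 (parisiLevelBar K q m j) ∧
    (∀ y, auxLevel K q m β j y ≤ parisiLevelBar K q m j y) ∧
    (∀ y, parisiLevelBar K q m j y ≤ auxLevel K q m β j y + β⁻¹ * Real.log 2) := by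
  induction j with
  | zero =>
    refine ⟨aux_lip_zero hβ, ?_, aux_zero_le hβ, aux_zero_ge hβ⟩
    refine LipschitzWith.of_le_add fun y y' => ?_
    simp only [parisiLevelBar, Real.dist_eq]
    linarith [abs_sub_abs_le_abs_sub y y']
  | succ j ih =>
    obtain ⟨h1, h2, h3, h4⟩ := ih (by omega)
    have hm' := hm (K - j) (by omega) (by omega)
    refine ⟨aux_pStep_lip h1 hm' _, aux_pStep_lip h2 hm' _, fun y => ?_, fun y => ?_⟩
    · have := aux_pStep_mono h1 h2 hm' (q (K - j) - q (K - j - 1)) y y 0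
        (fun w => by simpa using h3 (y + w))
      rw [add_zero] at this
      exact this
    · exact aux_pStep_mono h2 h1 hm' (q (K - j) - q (K - j - 1)) y y _ (fun w => h4 (y + w))

lemma aux_m_nonneg (X : ZeroTParam) : ∀ a, 1 ≤ a → a ≤ X.K → 0 ≤ X.m a := by
  intro a ha
  induction a, ha using Nat.le_induction with
  | base => exact fun _ => X.hm1
  | succ n hn ih => exact fun h => (ih (by omega)).trans (X.hm_mono n hn (by omega))

lemma aux_trial (X : ZeroTParam) (h : ℝ) {β : ℝ} (hβ : 0 < β) :
    β⁻¹ * trialAlpha X.K X.q (fun a => X.m a / β) β h =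
      β⁻¹ * Real.log 2 + auxLevel X.K X.q X.m β X.K h
        - 1 / 2 * ∫ r in (0 : ℝ)..1, r * xFun X.K X.q X.m r := by
  have hx : ∀ r, r * xFun X.K X.q (fun a => X.m a / β) r
      = β⁻¹ * (r * xFun X.K X.q X.m r) := by
    intro r
    unfold xFun
    split_ifs <;> ring
  have hl := congrFun (auxLevel_eq X.K X.q X.m hβ X.K) h
  unfold trialAlpha
  simp only [hx]
  rw [intervalIntegral.integral_const_mul, ← hl]
  field_simp

/-- Lemma `llim` of the paper: for a zero-temperature order
parameter `x̄` (values `0 ≤ m̄_1 ≤ … ≤ m̄_K`, not required to be `≤ 1`), taking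
`x = x̄/β` one has
`lim_{β→∞} β⁻¹ ᾱ(β, h; x̄/β) = f̄(0, h; x̄) − (1/2) ∫₀¹ r x̄(r) dr`,
where `f̄` is given by the same backward Gaussian recursion as the Parisi function but
with final condition `f̄(1, y) = |y|`. -/
theorem zeroT_limit_of_trial (X : ZeroTParam) (h : ℝ) :
    Tendsto (fun β : ℝ => β⁻¹ * trialAlpha X.K X.q (fun a => X.m a / β) β h) atTop
      (nhds (gsTrial X.K X.q X.m h)) := by
  have hlim : Tendsto (fun β : ℝ => gsTrial X.K X.q X.m h + β⁻¹ * Real.log 2) atTop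
      (nhds (gsTrial X.K X.q X.m h)) := by
    have := (tendsto_inv_atTop_zero (𝕜 := ℝ)).mul_const (Real.log 2)
    simpa using this.const_add (gsTrial X.K X.q X.m h)
  refine tendsto_of_tendsto_of_tendsto_of_le_of_le' tendsto_const_nhds hlim ?_ ?_
  · filter_upwards [eventually_gt_atTop (0 : ℝ)] with β hβ
    obtain ⟨-, -, -, h4⟩ := aux_levels X.K X.q X.m (aux_m_nonneg X) hβ X.K le_rfl
    rw [aux_trial X h hβ]
    unfold gsTrial
    linarith [h4 h]
  · filter_upwards [eventually_gt_atTop (0 : ℝ)] with β hβ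
    obtain ⟨-, -, h3, -⟩ := aux_levels X.K X.q X.m (aux_m_nonneg X) hβ X.K le_rfl
    rw [aux_trial X h hβ]
    unfold gsTrial
    linarith [h3 h]

end
end
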